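/- Let k ≥ 3 be odd. For every ε > 0 there exists N such that for all n ≥ N, every multiplicative k-Sidon subset A of {1,2,…,n} satisfies |A| ≤ π(n) + π(n/2) + n^{2/3}(log n)^{2^{1/3} − 1/3 + ε}. -/

import Mathlib

/-- A finite set of naturals is a multiplicative `k`-Sidon set if the equation
`s₁s₂⋯s_k = t₁t₂⋯t_k` has no solution consisting of `2k` pairwise distinct elements of it. -/
def MulSidonK (k : ℕ) (A : Finset ℕ) : Prop :=
  ¬ ∃ s t : Fin k → ℕ, (∀ i, s i ∈ A) ∧ (∀ i, t i ∈ A) ∧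
    Function.Injective (Sum.elim s t) ∧ ∏ i, s i = ∏ i, t i

def C6Free {α β : Type*} (E : Finset (α × β)) : Prop :=
  ∀ x1 x2 x3 : α, ∀ y1 y2 y3 : β, x1 ≠ x2 → x2 ≠ x3 → x1 ≠ x3 → y1 ≠ y2 → y2 ≠ y3 → y1 ≠ y3 →
    (x1, y1) ∈ E → (x2, y1) ∈ E → (x2, y2) ∈ E → (x3, y2) ∈ E → (x3, y3) ∈ E → (x1, y3) ∈ E → False

def C4Free {α β : Type*} (E : Finset (α × β)) : Prop :=
  ∀ x1 x2 : α, ∀ y1 y2 : β, x1 ≠ x2 → y1 ≠ y2 →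
    (x1, y1) ∈ E → (x2, y1) ∈ E → (x2, y2) ∈ E → (x1, y2) ∈ E → False

section comb
set_option linter.unusedSectionVars false
variable {α β : Type*} [DecidableEq α] [DecidableEq β]

lemma card_filter_fst (F : Finset (α × β)) (x : α) :
    (F.filter (fun e => e.1 = x)).card = ((F.filter (fun e => e.1 = x)).image Prod.snd).card := by
  rw [Finset.card_image_of_injOn]
  intro a ha b hb h
  simp at ha hb
  exact Prod.ext (ha.2.trans hb.2.symm) h

/-- no path `y1 x y2 x' y3` -/
lemma path_bound (F : Finset (α × β))
    (h : ∀ x x' : α, ∀ y1 y2 y3 : β, x ≠ x' → y1 ≠ y2 → y2 ≠ y3 → y1 ≠ y3 →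
      (x, y1) ∈ F → (x, y2) ∈ F → (x', y2) ∈ F → (x', y3) ∈ F → False) :
    F.card ≤ 2 * (F.image Prod.fst).card + (F.image Prod.snd).card := by
  classical
  set d : α → ℕ := fun x => (F.filter (fun e => e.1 = x)).card with hd
  have key : ∀ x, 3 ≤ d x → ∀ y : β, ∀ z : β, ∃ w, (x, w) ∈ F ∧ w ≠ y ∧ w ≠ z := by
    intro x hx y z
    by_contra hcon
    push Not at hcon
    have hsub : (F.filter (fun e => e.1 = x)).image Prod.snd ⊆ {y, z} := by
      intro w hw
      simp only [Finset.mem_image, Finset.mem_filter, Prod.exists] at hw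
      obtain ⟨a, b, ⟨hab, rfl⟩, rfl⟩ := hw
      have := hcon b hab
      simp only [Finset.mem_insert, Finset.mem_singleton]
      tauto
    have h1 := Finset.card_le_card hsub
    rw [← card_filter_fst] at h1
    have h2 := Finset.card_le_two (a := y) (b := z)
    simp only [hd] at hx
    omega
  rw [← Finset.card_filter_add_card_filter_not (s := F) (fun e => d e.1 ≤ 2)]
  apply Nat.add_le_add
  · calc _ ≤ 2 * ((F.filter (fun e => d e.1 ≤ 2)).image Prod.fst).card := by
          apply Finset.card_le_mul_card_image
          intro x hx
          simp only [Finset.mem_image, Finset.mem_filter, Prod.exists] at hx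
          obtain ⟨a, b, ⟨hab, hda⟩, rfl⟩ := hx
          refine le_trans (Finset.card_le_card ?_) hda
          intro e he
          simp only [Finset.mem_filter] at he ⊢
          exact ⟨he.1.1, he.2⟩
      _ ≤ _ := by
          gcongr
          apply Finset.filter_subset
  · rw [← Finset.card_image_of_injOn (f := Prod.snd) (s := F.filter (fun e => ¬ d e.1 ≤ 2))]
    · apply Finset.card_le_card
      apply Finset.image_subset_image
      apply Finset.filter_subset
    · rintro ⟨x, y⟩ ha ⟨x', y'⟩ hb hh
      simp only [Finset.coe_filter, Set.mem_ofPred_eq] at ha hb hh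
      subst hh
      by_contra hne
      have hxx : x ≠ x' := by rintro rfl; exact hne rfl
      obtain ⟨y1, h1, h1', -⟩ := key x (by omega) y y
      obtain ⟨y3, h3, h3', h3''⟩ := key x' (by omega) y y1
      exact h x x' y1 y y3 hxx h1' h3'.symm h3''.symm h1 ha.1 hb.1 h3

lemma C6Free.swap {E : Finset (α × β)} (h : C6Free E) : C6Free (E.image Prod.swap) := by
  intro x1 x2 x3 y1 y2 y3 a b c d e f g1 g2 g3 g4 g5 g6
  have hm : ∀ x y, (x, y) ∈ E.image Prod.swap → (y, x) ∈ E := by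
    intro x y hxy
    simp only [Finset.mem_image, Prod.exists, Prod.swap_prod_mk, Prod.mk.injEq] at hxy
    obtain ⟨p, q, hpq, rfl, rfl⟩ := hxy
    exact hpq
  -- cycle: x1 y1 x2 y2 x3 y3
  exact h y1 y2 y3 x2 x3 x1 d e f b (Ne.symm c) (Ne.symm a) (hm _ _ g2) (hm _ _ g3) (hm _ _ g4)
    (hm _ _ g5) (hm _ _ g6) (hm _ _ g1)

lemma C6Free.mono {E F : Finset (α × β)} (h : C6Free E) (hF : F ⊆ E) : C6Free F := by
  intro x1 x2 x3 y1 y2 y3 a b c d e f g1 g2 g3 g4 g5 g6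
  exact h x1 x2 x3 y1 y2 y3 a b c d e f (hF g1) (hF g2) (hF g3) (hF g4) (hF g5) (hF g6)

lemma min_deg_bound (E : Finset (α × β)) (h : C6Free E) (hne : E.Nonempty) (a b : ℝ)
    (ha : 8 ≤ a) (hb : 8 ≤ b)
    (hX : ∀ x ∈ E.image Prod.fst, a ≤ ((E.filter (fun e => e.1 = x)).card : ℝ))
    (hY : ∀ y ∈ E.image Prod.snd, b ≤ ((E.filter (fun e => e.2 = y)).card : ℝ)) :
    a ^ 2 * b ≤ 16 * ((E.image Prod.snd).card : ℝ) := by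
  classical
  obtain ⟨⟨x0, y0⟩, h0⟩ := hne
  set N1 := (E.filter (fun e => e.1 = x0)).image Prod.snd with hN1
  have memN1 : ∀ y, y ∈ N1 ↔ (x0, y) ∈ E := by
    intro y
    simp [hN1]
  have cN1 : a ≤ (N1.card : ℝ) := by
    rw [hN1, ← card_filter_fst]
    exact hX x0 (Finset.mem_image_of_mem Prod.fst h0)
  set F1 := E.filter (fun e => e.2 ∈ N1 ∧ e.1 ≠ x0) with hF1
  set N2 := F1.image Prod.fst with hN2
  have memF1 : ∀ x y, (x, y) ∈ F1 ↔ (x, y) ∈ E ∧ (x0, y) ∈ E ∧ x ≠ x0 := by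
    intro x y
    simp [hF1, memN1]
  have F1snd : F1.image Prod.snd ⊆ N1 := by
    intro y hy
    simp only [Finset.mem_image, Prod.exists] at hy
    obtain ⟨x, y, hxy, rfl⟩ := hy
    rw [memF1] at hxy
    exact (memN1 _).2 hxy.2.1
  have F1le : F1.card ≤ 2 * N2.card + N1.card := by
    refine (path_bound F1 ?_).trans (Nat.add_le_add_left (Finset.card_le_card F1snd) _)
    intro x x' y1 y2 y3 hx h12 h23 h13 g1 g2 g3 g4
    rw [memF1] at g1 g2 g3 g4
    exact h x0 x x' y1 y2 y3 g1.2.2.symm hx g4.2.2.symm h12 h23 h13 g1.2.1 g1.1 g2.1 g3.1 g4.1 g4.2.1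
  have F1ge : (b - 1) * N1.card ≤ (F1.card : ℝ) := by
    have h1 : F1.card = ∑ y ∈ N1, (F1.filter (fun e => e.2 = y)).card := by
      apply Finset.card_eq_sum_card_fiberwise
      intro e he
      exact F1snd (Finset.mem_image_of_mem _ he)
    rw [h1]
    push_cast
    rw [mul_comm, ← nsmul_eq_mul, ← Finset.sum_const]
    apply Finset.sum_le_sum
    intro y hy
    have h2 := hY y (Finset.mem_image_of_mem Prod.snd ((memN1 y).1 hy))
    have h3 : (E.filter (fun e => e.2 = y)).card ≤ (F1.filter (fun e => e.2 = y)).card + 1 := by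
      calc _ ≤ (insert (x0, y) (F1.filter (fun e => e.2 = y))).card := by
            apply Finset.card_le_card
            rintro ⟨x, y'⟩ he
            simp only [Finset.mem_filter] at he
            obtain ⟨he, rfl⟩ := he
            by_cases hx : x = x0
            · subst hx; simp
            · apply Finset.mem_insert_of_mem
              simp only [Finset.mem_filter, and_true]
              exact (memF1 _ _).2 ⟨he, (memN1 _).1 hy, hx⟩
        _ ≤ _ := Finset.card_insert_le _ _
    have h3' : ((E.filter (fun e => e.2 = y)).card : ℝ) ≤ (F1.filter (fun e => e.2 = y)).card + 1 := by
      exact_mod_cast h3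
    linarith
  have par : ∀ x ∈ N2, ∃ p, (x, p) ∈ E ∧ (x0, p) ∈ E ∧ x ≠ x0 := by
    intro x hx
    simp only [hN2, Finset.mem_image, Prod.exists] at hx
    obtain ⟨x, y, hxy, rfl⟩ := hx
    exact ⟨y, (memF1 _ _).1 hxy⟩
  have : Nonempty β := ⟨y0⟩
  choose! P hP using par
  set F := E.filter (fun e => e.1 ∈ N2 ∧ e.2 ∉ N1) with hF
  have memF : ∀ x y, (x, y) ∈ F ↔ (x, y) ∈ E ∧ x ∈ N2 ∧ (x0, y) ∉ E := by
    intro x y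
    simp [hF, memN1]
  have same : ∀ x x' y, (x, y) ∈ F → (x', y) ∈ F → x ≠ x' → P x = P x' := by
    intro x x' y g1 g2 hx
    by_contra hne
    rw [memF] at g1 g2
    obtain ⟨p1, p2, p3⟩ := hP x g1.2.1
    obtain ⟨q1, q2, q3⟩ := hP x' g2.2.1
    refine h x0 x x' (P x) y (P x') p3.symm hx q3.symm ?_ ?_ hne p2 p1 g1.1 g2.1 q1 q2
    · rintro rfl; exact g1.2.2 p2
    · rintro rfl; exact g2.2.2 q2
  have Fle : F.card ≤ 2 * (E.image Prod.snd).card + N2.card := by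
    have h1 := path_bound (F.image Prod.swap) ?_
    · rw [Finset.card_image_of_injective _ Prod.swap_injective, Finset.image_image,
        Finset.image_image] at h1
      refine h1.trans (Nat.add_le_add (Nat.mul_le_mul_left _ (Finset.card_le_card ?_))
        (Finset.card_le_card ?_))
      · intro y hy
        simp only [Finset.mem_image, Function.comp, Prod.exists, Prod.fst_swap] at hy
        obtain ⟨x, y, hxy, rfl⟩ := hy
        exact Finset.mem_image_of_mem Prod.snd ((memF _ _).1 hxy).1
      · intro y hy
        simp only [Finset.mem_image, Function.comp, Prod.exists, Prod.snd_swap] at hy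
        obtain ⟨x, y, hxy, rfl⟩ := hy
        exact ((memF _ _).1 hxy).2.1
    · have hm : ∀ x y, (x, y) ∈ F.image Prod.swap → (y, x) ∈ F := by
        intro x y hxy
        simp only [Finset.mem_image, Prod.exists, Prod.swap_prod_mk, Prod.mk.injEq] at hxy
        obtain ⟨p, q, hpq, rfl, rfl⟩ := hxy
        exact hpq
      intro y y' x1 x2 x3 hy h12 h23 h13 g1 g2 g3 g4
      have g1 := hm _ _ g1
      have g2 := hm _ _ g2
      have g3 := hm _ _ g3
      have g4 := hm _ _ g4
      have s1 := same _ _ _ g1 g2 h12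
      have s2 := same _ _ _ g3 g4 h23
      rw [memF] at g1 g2 g3 g4
      obtain ⟨p1, p2, p3⟩ := hP x1 g1.2.1
      obtain ⟨q1, q2, q3⟩ := hP x3 g4.2.1
      refine h x1 x2 x3 y y' (P x1) h12 h23 h13 hy ?_ ?_ g1.1 g2.1 g3.1 g4.1 ?_ p1
      · rintro rfl; exact g4.2.2 p2
      · rintro rfl; exact g1.2.2 p2
      · rw [s1, s2]; exact q1
  have Fge : a * N2.card ≤ (F.card : ℝ) + F1.card := by
    have h1 : (E.filter (fun e => e.1 ∈ N2)).card ≤ F.card + F1.card := by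
      calc _ ≤ (F ∪ F1).card := by
            apply Finset.card_le_card
            rintro ⟨x, y⟩ he
            simp only [Finset.mem_filter] at he
            by_cases hy : (x0, y) ∈ E
            · exact Finset.mem_union_right _ ((memF1 _ _).2 ⟨he.1, hy, (hP x he.2).2.2⟩)
            · exact Finset.mem_union_left _ ((memF _ _).2 ⟨he.1, he.2, hy⟩)
        _ ≤ _ := Finset.card_union_le _ _
    have h2 : (E.filter (fun e => e.1 ∈ N2)).card = ∑ x ∈ N2, (E.filter (fun e => e.1 = x)).card := by
      rw [Finset.card_eq_sum_card_fiberwise (f := Prod.fst) (t := N2)]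
      · apply Finset.sum_congr rfl
        intro x hx
        congr 1
        ext e
        simp only [Finset.mem_filter]
        constructor
        · rintro ⟨⟨p, q⟩, r⟩; exact ⟨p, r⟩
        · rintro ⟨p, rfl⟩; exact ⟨⟨p, hx⟩, rfl⟩
      · intro e he
        simp only [Finset.coe_filter, Set.mem_ofPred_eq] at he
        exact he.2
    have h3 : a * N2.card ≤ ((E.filter (fun e => e.1 ∈ N2)).card : ℝ) := by
      rw [h2]
      push_cast
      rw [mul_comm, ← nsmul_eq_mul, ← Finset.sum_const]
      apply Finset.sum_le_sum
      intro x hx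
      exact hX x (Finset.mem_image_of_mem Prod.fst (hP x hx).1)
    have : ((E.filter (fun e => e.1 ∈ N2)).card : ℝ) ≤ F.card + F1.card := by exact_mod_cast h1
    linarith
  have F1le' : (F1.card : ℝ) ≤ 2 * N2.card + N1.card := by exact_mod_cast F1le
  have Fle' : (F.card : ℝ) ≤ 2 * (E.image Prod.snd).card + N2.card := by exact_mod_cast Fle
  set n1 : ℝ := (N1.card : ℝ)
  set n2 : ℝ := (N2.card : ℝ)
  set n3 : ℝ := ((E.image Prod.snd).card : ℝ)
  have i1 : (b - 2) * n1 ≤ 2 * n2 := by linarith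
  have i2 : b * n1 ≤ 4 * n2 := by nlinarith
  have i3 : (a - 3) * n2 ≤ 2 * n3 + n1 := by linarith
  have i4 : (a - 4) * n2 ≤ 2 * n3 := by nlinarith
  have i5 : a * n2 ≤ 4 * n3 := by nlinarith
  have i6 : b * a ≤ 4 * n2 := by nlinarith
  nlinarith

lemma prune (E : Finset (α × β)) (X : Finset α) (Y : Finset β) (hE : E ⊆ X ×ˢ Y)
    (a b : ℝ) (ha : 0 ≤ a) (hb : 0 ≤ b) (hab : a * X.card + b * Y.card < E.card) :
    ∃ F ⊆ E, F.Nonempty ∧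
      (∀ x ∈ F.image Prod.fst, a ≤ ((F.filter (fun e => e.1 = x)).card : ℝ)) ∧
      (∀ y ∈ F.image Prod.snd, b ≤ ((F.filter (fun e => e.2 = y)).card : ℝ)) := by
  classical
  set G : Finset α × Finset β → Finset (α × β) := fun p => E.filter (fun e => e.1 ∈ p.1 ∧ e.2 ∈ p.2)
    with hG
  obtain ⟨⟨X', Y'⟩, hm, hmax⟩ := Finset.exists_max_image (X.powerset ×ˢ Y.powerset)
    (fun p => ((G p).card : ℝ) - a * p.1.card - b * p.2.card)
    ⟨(X, Y), by simp⟩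
  simp only [Finset.mem_product, Finset.mem_powerset] at hm
  have hGE : G (X, Y) = E := by
    apply Finset.filter_true_of_mem
    intro e he
    exact Finset.mem_product.1 (hE he)
  have h0 := hmax (X, Y) (by simp)
  simp only [hGE] at h0
  by_cases hF : (G (X', Y')).Nonempty
  · refine ⟨G (X', Y'), Finset.filter_subset _ _, hF, ?_, ?_⟩
    · intro x hx
      have hxX : x ∈ X' := by
        simp only [hG, Finset.mem_image, Finset.mem_filter] at hx
        obtain ⟨e, he, rfl⟩ := hx
        exact he.2.1
      have h1 := hmax (X'.erase x, Y') (by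
        simp only [Finset.mem_product, Finset.mem_powerset]
        exact ⟨(Finset.erase_subset _ _).trans hm.1, hm.2⟩)
      have h2 : (G (X', Y')).card ≤ (G (X'.erase x, Y')).card
          + ((G (X', Y')).filter (fun e => e.1 = x)).card := by
        refine le_trans (Finset.card_le_card ?_) (Finset.card_union_le _ _)
        intro e he
        simp only [hG, Finset.mem_union, Finset.mem_filter, Finset.mem_erase] at he ⊢
        tauto
      have h3 : ((X'.erase x).card : ℝ) = X'.card - 1 := by
        rw [Finset.card_erase_of_mem hxX, Nat.cast_sub (Finset.card_pos.2 ⟨x, hxX⟩)]; simp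
      have h2' : ((G (X', Y')).card : ℝ) ≤ (G (X'.erase x, Y')).card
          + ((G (X', Y')).filter (fun e => e.1 = x)).card := by exact_mod_cast h2
      simp only [h3] at h1
      linarith
    · intro y hy
      have hyY : y ∈ Y' := by
        simp only [hG, Finset.mem_image, Finset.mem_filter] at hy
        obtain ⟨e, he, rfl⟩ := hy
        exact he.2.2
      have h1 := hmax (X', Y'.erase y) (by
        simp only [Finset.mem_product, Finset.mem_powerset]
        exact ⟨hm.1, (Finset.erase_subset _ _).trans hm.2⟩)
      have h2 : (G (X', Y')).card ≤ (G (X', Y'.erase y)).card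
          + ((G (X', Y')).filter (fun e => e.2 = y)).card := by
        refine le_trans (Finset.card_le_card ?_) (Finset.card_union_le _ _)
        intro e he
        simp only [hG, Finset.mem_union, Finset.mem_filter, Finset.mem_erase] at he ⊢
        tauto
      have h3 : ((Y'.erase y).card : ℝ) = Y'.card - 1 := by
        rw [Finset.card_erase_of_mem hyY, Nat.cast_sub (Finset.card_pos.2 ⟨y, hyY⟩)]; simp
      have h2' : ((G (X', Y')).card : ℝ) ≤ (G (X', Y'.erase y)).card
          + ((G (X', Y')).filter (fun e => e.2 = y)).card := by exact_mod_cast h2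
      simp only [h3] at h1
      linarith
  · exfalso
    rw [Finset.not_nonempty_iff_eq_empty] at hF
    -- compare with the empty pair and general negativity
    have h1 : ((G (X', Y')).card : ℝ) = 0 := by rw [hF]; simp
    simp only [h1] at h0
    have h4 : 0 < - a * X'.card - b * Y'.card := by linarith
    have := mul_nonneg ha (Nat.cast_nonneg (α := ℝ) X'.card)
    have := mul_nonneg hb (Nat.cast_nonneg (α := ℝ) Y'.card)
    linarith

lemma c6_bound (E : Finset (α × β)) (h : C6Free E) (X : Finset α) (Y : Finset β)
    (hE : E ⊆ X ×ˢ Y) :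
    (E.card : ℝ) ≤ 8 * ((X.card : ℝ) * Y.card) ^ ((2 : ℝ) / 3) + 24 * X.card + 24 * Y.card := by
  by_contra hcon
  push Not at hcon
  set x : ℝ := (X.card : ℝ) with hx
  set y : ℝ := (Y.card : ℝ) with hy
  set e : ℝ := (E.card : ℝ) with he
  have hx0 : 0 ≤ x := Nat.cast_nonneg _
  have hy0 : 0 ≤ y := Nat.cast_nonneg _
  set t : ℝ := (x * y) ^ ((2 : ℝ) / 3) with ht
  have ht0 : 0 ≤ t := Real.rpow_nonneg (mul_nonneg hx0 hy0) _
  have ht3 : t ^ 3 = (x * y) ^ 2 := by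
    rw [ht, ← Real.rpow_natCast, ← Real.rpow_mul (mul_nonneg hx0 hy0), ← Real.rpow_natCast]
    norm_num
  have he0 : 0 < e := by linarith
  obtain ⟨⟨u, v⟩, huv⟩ : E.Nonempty := by
    rw [← Finset.card_pos]; rw [he] at he0; exact_mod_cast he0
  have huv' := Finset.mem_product.1 (hE huv)
  have hx1 : 0 < x := by
    rw [hx]; exact_mod_cast Finset.card_pos.2 ⟨u, huv'.1⟩
  have hy1 : 0 < y := by
    rw [hy]; exact_mod_cast Finset.card_pos.2 ⟨v, huv'.2⟩
  have ha8 : 8 ≤ e / (3 * x) := by rw [le_div_iff₀ (by positivity)]; linarith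
  have hb8 : 8 ≤ e / (3 * y) := by rw [le_div_iff₀ (by positivity)]; linarith
  have hax : e / (3 * x) * x = e / 3 := by field_simp
  have hby : e / (3 * y) * y = e / 3 := by field_simp
  obtain ⟨F, hFE, hFne, hF1, hF2⟩ := prune E X Y hE (e / (3 * x)) (e / (3 * y)) (by linarith)
    (by linarith) (by rw [← hx, ← hy, hax, hby]; linarith)
  have hFfree := h.mono hFE
  have b1 := min_deg_bound F hFfree hFne _ _ ha8 hb8 hF1 hF2
  have b2 := min_deg_bound (F.image Prod.swap) hFfree.swap (hFne.image _) _ _ hb8 ha8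
    (by
      intro q hq
      rw [Finset.image_image] at hq
      refine (hF2 q (by simpa using hq)).trans ?_
      rw [Finset.filter_image, Finset.card_image_of_injective _ Prod.swap_injective]
      simp)
    (by
      intro q hq
      rw [Finset.image_image] at hq
      refine (hF1 q (by simpa using hq)).trans ?_
      rw [Finset.filter_image, Finset.card_image_of_injective _ Prod.swap_injective]
      simp)
  have c1 : ((F.image Prod.snd).card : ℝ) ≤ y := by
    rw [hy]
    norm_cast
    apply Finset.card_le_card
    intro q hq
    simp only [Finset.mem_image] at hq
    obtain ⟨w, hw, rfl⟩ := hq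
    exact (Finset.mem_product.1 (hE (hFE hw))).2
  have c2 : (((F.image Prod.swap).image Prod.snd).card : ℝ) ≤ x := by
    rw [hx]
    norm_cast
    apply Finset.card_le_card
    intro q hq
    simp only [Finset.mem_image, exists_exists_and_eq_and] at hq
    obtain ⟨w, hw, rfl⟩ := hq
    exact (Finset.mem_product.1 (hE (hFE hw))).1
  set a := e / (3 * x) with hadef
  set b := e / (3 * y) with hbdef
  have d1 : a ^ 2 * b ≤ 16 * y := by linarith
  have d2 : b ^ 2 * a ≤ 16 * x := by linarith
  have hea : e = 3 * x * a := by rw [hadef]; field_simp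
  have heb : e = 3 * y * b := by rw [hbdef]; field_simp
  clear_value a b t x y e
  clear hadef hbdef hax hby ht
  have d3 : (a ^ 2 * b) * (b ^ 2 * a) ≤ (16 * y) * (16 * x) :=
    mul_le_mul d1 d2 (by positivity) (by positivity)
  have d4 : e ^ 6 = 729 * (x * y) ^ 3 * ((a ^ 2 * b) * (b ^ 2 * a)) := by
    calc e ^ 6 = e ^ 3 * e ^ 3 := by ring
      _ = (3 * x * a) ^ 3 * (3 * y * b) ^ 3 := by rw [← hea, ← heb]
      _ = _ := by ring
  have d5 : e ^ 6 ≤ 186624 * (x * y) ^ 4 := by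
    rw [d4]
    calc _ ≤ 729 * (x * y) ^ 3 * ((16 * y) * (16 * x)) := by gcongr
      _ = _ := by ring
  have d6 : (8 * t) ^ 6 < e ^ 6 := pow_lt_pow_left₀ (by linarith) (by positivity) (by norm_num)
  have d7 : (8 * t) ^ 6 = 262144 * (x * y) ^ 4 := by
    calc (8 * t) ^ 6 = 262144 * (t ^ 3) ^ 2 := by ring
      _ = _ := by rw [ht3]; ring
  have : 0 < (x * y) ^ 4 := by positivity
  linarith

/-- the sharp lemma for large primes -/
lemma c6_prime_bound (E : Finset (α × β)) (h : C6Free E) (X : Finset α) (Y : Finset β)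
    (hE : E ⊆ X ×ˢ Y) : E.card ≤ 2 * X.card + 2 * Y.card ^ 2 := by
  classical
  rcases E.eq_empty_or_nonempty with rfl | ⟨e0, he0⟩
  · simp
  have : Nonempty β := ⟨e0.2⟩
  have hc : ∀ x ∈ E.image Prod.fst, ∃ y, (x, y) ∈ E := by
    intro x hx
    simp only [Finset.mem_image] at hx
    obtain ⟨e, he, rfl⟩ := hx
    exact ⟨e.2, he⟩
  choose! c hc using hc
  have hc' : ∀ x y, (x, y) ∈ E → (x, c x) ∈ E := fun x y hxy =>
    hc x (Finset.mem_image_of_mem Prod.fst hxy)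
  set M : β → β → Finset α := fun y y' => X.filter (fun x => (x, y) ∈ E ∧ (x, y') ∈ E) with hM
  have memM : ∀ y y' x, x ∈ M y y' ↔ (x, y) ∈ E ∧ (x, y') ∈ E := by
    intro y y' x
    simp only [hM, Finset.mem_filter]
    exact ⟨fun h => h.2, fun h => ⟨(Finset.mem_product.1 (hE h.1)).1, h⟩⟩
  rw [← Finset.card_filter_add_card_filter_not (s := E)
    (fun e => e.2 = c e.1 ∨ 3 ≤ (M (c e.1) e.2).card)]
  apply Nat.add_le_add
  · refine le_trans (Finset.card_le_mul_card_image (f := Prod.fst) _ 2 ?_)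
      (Nat.mul_le_mul_left _ (Finset.card_le_card ?_))
    · intro x hx
      by_contra hcon
      push Not at hcon
      rw [Finset.two_lt_card] at hcon
      obtain ⟨⟨x1, y1⟩, h1, ⟨x2, y2⟩, h2, ⟨x3, y3⟩, h3, n12, n13, n23⟩ := hcon
      simp only [Finset.mem_filter] at h1 h2 h3
      obtain ⟨⟨h1, h1'⟩, rfl⟩ := h1
      obtain ⟨⟨h2, h2'⟩, rfl⟩ := h2
      obtain ⟨⟨h3, h3'⟩, rfl⟩ := h3
      have main : ∀ y y', y ≠ y' → y ≠ c x3 → y' ≠ c x3 → (x3, y) ∈ E → (x3, y') ∈ E →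
          3 ≤ (M (c x3) y).card → 3 ≤ (M (c x3) y').card → False := by
        intro y y' a1 a2 a3 a4 a5 a6 a7
        obtain ⟨p, hp, hp1⟩ := Finset.exists_mem_notMem_of_card_lt_card
          (s := {x3}) (t := M (c x3) y) (by simp; omega)
        obtain ⟨q, hq, hq1⟩ := Finset.exists_mem_notMem_of_card_lt_card
          (s := {x3, p}) (t := M (c x3) y') (by
            have := Finset.card_le_two (a := x3) (b := p); omega)
        simp only [Finset.mem_insert, Finset.mem_singleton, not_or] at hp1 hq1
        rw [memM] at hp hq
        exact h x3 p q y (c x3) y' (Ne.symm hp1) (Ne.symm hq1.2) (Ne.symm hq1.1) a2 (Ne.symm a3) a1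
          a4 hp.2 hp.1 hq.1 hq.2 a5
      simp only [ne_eq, Prod.mk.injEq, true_and] at n12 n13 n23
      by_cases e1 : y1 = c x3
      · refine main y2 y3 n23 ?_ ?_ h2 h3 ?_ ?_ <;> grind
      · by_cases e2 : y2 = c x3
        · refine main y1 y3 n13 ?_ ?_ h1 h3 ?_ ?_ <;> grind
        · refine main y1 y2 n12 ?_ ?_ h1 h2 ?_ ?_ <;> grind
    · intro x hx
      simp only [Finset.mem_image, Finset.mem_filter] at hx
      obtain ⟨e, he, rfl⟩ := hx
      exact (Finset.mem_product.1 (hE he.1)).1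
  · refine le_trans (Finset.card_le_mul_card_image (f := fun e : α × β => (c e.1, e.2)) _ 2 ?_)
      (Nat.mul_le_mul_left _ ((Finset.card_le_card (t := Y ×ˢ Y) ?_).trans ?_))
    · rintro ⟨y, y'⟩ hx
      simp only [Finset.mem_image, Finset.mem_filter, Prod.mk.injEq, Prod.exists] at hx
      obtain ⟨x, z, ⟨hxz, hh⟩, rfl, rfl⟩ := hx
      push Not at hh
      refine le_trans ?_ (Nat.le_of_lt_succ hh.2)
      refine Finset.card_le_card_of_injOn Prod.fst ?_ ?_
      · rintro ⟨p, q⟩ hpq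
        simp only [Finset.coe_filter, Finset.mem_filter, Set.mem_ofPred_eq, Prod.mk.injEq] at hpq
        obtain ⟨⟨g1, g2⟩, g3, rfl⟩ := hpq
        simp only [Finset.mem_coe, memM]
        refine ⟨?_, g1⟩
        rw [← g3]; exact hc' _ _ g1
      · rintro ⟨p, q⟩ hpq ⟨p', q'⟩ hpq' hh
        simp only [Finset.coe_filter, Finset.mem_filter, Set.mem_ofPred_eq, Prod.mk.injEq] at hpq hpq' hh
        rw [Prod.mk.injEq]
        exact ⟨hh, hpq.2.2.trans hpq'.2.2.symm⟩
    · rintro ⟨y, y'⟩ hx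
      simp only [Finset.mem_image, Finset.mem_filter, Prod.mk.injEq, Prod.exists] at hx
      obtain ⟨x, z, ⟨hxz, hh⟩, rfl, rfl⟩ := hx
      exact Finset.mem_product.2 ⟨(Finset.mem_product.1 (hE (hc' _ _ hxz))).2,
        (Finset.mem_product.1 (hE hxz)).2⟩
    · rw [Finset.card_product, sq]

lemma c4_prime_bound (E : Finset (α × β)) (h : C4Free E) (X : Finset α) (Y : Finset β)
    (hE : E ⊆ X ×ˢ Y) : E.card ≤ X.card + Y.card ^ 2 := by
  classical
  rcases E.eq_empty_or_nonempty with rfl | ⟨e0, he0⟩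
  · simp
  have : Nonempty β := ⟨e0.2⟩
  have hc : ∀ x ∈ E.image Prod.fst, ∃ y, (x, y) ∈ E := by
    intro x hx
    simp only [Finset.mem_image] at hx
    obtain ⟨e, he, rfl⟩ := hx
    exact ⟨e.2, he⟩
  choose! c hc using hc
  have hc' : ∀ x y, (x, y) ∈ E → (x, c x) ∈ E := fun x y hxy =>
    hc x (Finset.mem_image_of_mem Prod.fst hxy)
  rw [← Finset.card_filter_add_card_filter_not (s := E) (fun e => e.2 = c e.1)]
  apply Nat.add_le_add
  · refine Finset.card_le_card_of_injOn Prod.fst ?_ ?_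
    · intro e he
      simp only [Finset.coe_filter, Set.mem_ofPred_eq] at he
      exact (Finset.mem_product.1 (hE he.1)).1
    · rintro ⟨p, q⟩ hpq ⟨p', q'⟩ hpq' hh
      simp only [Finset.coe_filter, Set.mem_ofPred_eq] at hpq hpq' hh
      subst hh
      rw [hpq.2, hpq'.2]
  · rw [sq, ← Finset.card_product]
    refine Finset.card_le_card_of_injOn (fun e : α × β => (c e.1, e.2)) ?_ ?_
    · rintro ⟨x, z⟩ he
      simp only [Finset.coe_filter, Set.mem_ofPred_eq] at he
      exact Finset.mem_product.2 ⟨(Finset.mem_product.1 (hE (hc' _ _ he.1))).2,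
        (Finset.mem_product.1 (hE he.1)).2⟩
    · rintro ⟨p, q⟩ hpq ⟨p', q'⟩ hpq' hh
      simp only [Finset.coe_filter, Set.mem_ofPred_eq, Prod.mk.injEq] at hpq hpq' hh
      obtain ⟨h1, rfl⟩ := hh
      by_contra hne
      have hpp : p ≠ p' := by rintro rfl; exact hne rfl
      refine h p p' q (c p) hpp hpq.2 hpq.1 hpq'.1 ?_ (hc' _ _ hpq.1)
      rw [h1]; exact hc' _ _ hpq'.1

lemma C4Free.mono {E F : Finset (α × β)} (h : C4Free E) (hF : F ⊆ E) : C4Free F := by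
  intro x1 x2 y1 y2 a b g1 g2 g3 g4
  exact h x1 x2 y1 y2 a b (hF g1) (hF g2) (hF g3) (hF g4)

end comb

lemma c4_block_bound (E : Finset (ℕ × ℕ)) (h : C4Free E) (X : Finset ℕ) (Y B : ℕ) (hB : 0 < B)
    (hE : E ⊆ X ×ˢ Finset.range (Y * B)) : E.card ≤ Y * (X.card + B ^ 2) := by
  have h1 : E.card = ∑ q ∈ Finset.range Y, (E.filter (fun e => e.2 / B = q)).card := by
    apply Finset.card_eq_sum_card_fiberwise
    intro e he
    have := (Finset.mem_product.1 (hE he)).2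
    simp only [Finset.coe_range, Set.mem_Iio, Finset.mem_range] at this ⊢
    exact Nat.div_lt_of_lt_mul (by rwa [mul_comm] at this)
  rw [h1]
  calc _ ≤ ∑ q ∈ Finset.range Y, (X.card + B ^ 2) := by
        apply Finset.sum_le_sum
        intro q hq
        have := c4_prime_bound (E.filter (fun e => e.2 / B = q)) (h.mono (Finset.filter_subset _ _))
          X (Finset.Ico (q * B) (q * B + B)) (by
            intro e he
            simp only [Finset.mem_filter] at he
            refine Finset.mem_product.2 ⟨(Finset.mem_product.1 (hE he.1)).1, ?_⟩
            rw [Finset.mem_Ico, ← he.2]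
            have := Nat.div_add_mod e.2 B
            have := Nat.mod_lt e.2 hB
            rw [mul_comm (e.2 / B) B]
            constructor <;> omega)
        simpa using this
    _ = _ := by simp

lemma crossing' (n e c : ℕ) (m : ℕ) (hm : m ≠ 0) (h1 : c ^ e < n) (h2 : n ≤ (c * m) ^ e) :
    ∃ d q, q.Prime ∧ d * q ∣ m ∧ (c * d) ^ e < n ∧ n ≤ (c * d * q) ^ e := by
  induction m using induction_on_primes with
  | zero => exact absurd rfl hm
  | one => simp at h2; omega
  | prime_mul p a hp ih =>
    have ha : a ≠ 0 := by rintro rfl; simp at hm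
    by_cases h : n ≤ (c * a) ^ e
    · obtain ⟨d, q, hq, hd, h3, h4⟩ := ih ha h
      exact ⟨d, q, hq, hd.mul_left p, h3, h4⟩
    · push Not at h
      refine ⟨a, p, hp, by rw [mul_comm], h, ?_⟩
      rwa [mul_assoc, mul_comm a p]

lemma rough_smooth (z a : ℕ) (ha : a ≠ 0) : ∃ r s, a = r * s ∧
    (∀ p, p.Prime → p ∣ r → z < p) ∧ (∀ p, p.Prime → p ∣ s → p ≤ z) := by
  induction a using induction_on_primes with
  | zero => exact absurd rfl ha
  | one =>
    refine ⟨1, 1, rfl, ?_, ?_⟩ <;>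
    · intro p hp h
      exact absurd (Nat.dvd_one.1 h) hp.one_lt.ne'
  | prime_mul p a hp ih =>
    have ha : a ≠ 0 := by rintro rfl; simp at ha
    obtain ⟨r, s, rfl, h1, h2⟩ := ih ha
    by_cases hpz : z < p
    · refine ⟨p * r, s, by ring, ?_, h2⟩
      intro q hq hd
      rcases (hq.dvd_mul).1 hd with h | h
      · rwa [(Nat.prime_dvd_prime_iff_eq hq hp).1 h]
      · exact h1 q hq h
    · refine ⟨r, p * s, by ring, h1, ?_⟩
      intro q hq hd
      rcases (hq.dvd_mul).1 hd with h | h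
      · rw [(Nat.prime_dvd_prime_iff_eq hq hp).1 h]; omega
      · exact h2 q hq h

lemma classify (n z a : ℕ) (hn : 2 ≤ n) (ha0 : a ≠ 0) (ha : n ≤ a ^ 2)
    (hp : ∀ p, p.Prime → p ∣ a → p ^ 3 ≤ n ^ 2) :
    (∃ w, w ∣ a ∧ n ≤ w ^ 3 ∧ w ^ 3 ≤ n ^ 2 ∧ ∀ p, p.Prime → p ∣ w → z < p) ∨
    (∃ w, w ∣ a ∧ n ≤ w ^ 2 ∧ w ^ 2 ≤ n * z ^ 2) := by
  obtain ⟨r, s, rfl, hr, hs⟩ := rough_smooth z a ha0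
  have hr0 : r ≠ 0 := by rintro rfl; simp at ha0
  have hs0 : s ≠ 0 := by rintro rfl; simp at ha0
  by_cases h : n ≤ r ^ 3
  · left
    obtain ⟨d, q, hq, hd, h1, h2⟩ := crossing' n 3 1 r hr0 (by simp; omega) (by simpa using h)
    simp only [one_mul] at h1 h2
    by_cases h3 : (d * q) ^ 3 ≤ n ^ 2
    · exact ⟨d * q, hd.mul_right s, h2, h3, fun p hp hpd => hr p hp (hpd.trans hd)⟩
    · have hqr : q ∣ r := (Dvd.intro_left d rfl).trans hd
      refine ⟨q, hqr.mul_right s, ?_, hp q hq (hqr.mul_right s), fun p hp hpd =>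
        hr p hp (hpd.trans hqr)⟩
      push Not at h3
      rw [mul_pow] at h3
      by_contra hcon
      push Not at hcon
      have : d ^ 3 * q ^ 3 ≤ n * n := Nat.mul_le_mul h1.le hcon.le
      nlinarith
  · right
    push Not at h
    have h' : r ^ 2 < n := by
      refine lt_of_le_of_lt (Nat.pow_le_pow_right (by omega) (by norm_num)) h
    obtain ⟨d, q, hq, hd, h1, h2⟩ := crossing' n 2 r s hs0 h' ha
    refine ⟨r * d * q, ?_, h2, ?_⟩
    · rw [mul_assoc]; exact Nat.mul_dvd_mul_left r hd
    · rw [mul_pow]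
      have := hs q hq ((Dvd.intro_left d rfl).trans hd)
      exact Nat.mul_le_mul h1.le (Nat.pow_le_pow_left this 2)

open Finset in
lemma sum_inv_primes (m i : ℕ) (hm : 1 ≤ m) :
    ∑ p ∈ (Finset.range (2 ^ (i + 1))).filter (fun p => p.Prime ∧ 2 ^ m < p), (1 : ℝ) / p ≤
      ∑ j ∈ Finset.Icc m i, (4 : ℝ) / j := by
  rw [← Finset.sum_fiberwise_of_maps_to (t := Finset.Icc m i) (g := Nat.log 2)]
  · apply Finset.sum_le_sum
    intro j hj
    rw [Finset.mem_Icc] at hj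
    have hj0 : (0 : ℝ) < j := by exact_mod_cast (by omega : 0 < j)
    have hl2 : 0 < Real.log 2 := Real.log_pos (by norm_num)
    set S := ((Finset.range (2 ^ (i + 1))).filter (fun p => p.Prime ∧ 2 ^ m < p)).filter
      (fun p => Nat.log 2 p = j) with hS
    have hS' : ∀ p ∈ S, p.Prime ∧ 2 ^ j ≤ p ∧ p < 2 ^ (j + 1) := by
      intro p hp
      simp only [hS, Finset.mem_filter] at hp
      refine ⟨hp.1.2.1, ?_, ?_⟩
      · rw [← hp.2]; exact Nat.pow_log_le_self 2 hp.1.2.1.ne_zero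
      · rw [← hp.2]; exact Nat.lt_pow_succ_log_self (by norm_num) p
    have h1 : ∑ p ∈ S, Real.log p ≤ Real.log 4 * 2 ^ (j + 1) := by
      refine le_trans ?_ (Chebyshev.theta_le_log4_mul_x (x := 2 ^ (j + 1)) (by positivity))
      rw [Chebyshev.theta_eq_sum_Icc]
      apply Finset.sum_le_sum_of_subset_of_nonneg
      · intro p hp
        obtain ⟨a, b, c⟩ := hS' p hp
        simp only [Finset.mem_filter, Finset.mem_Icc, zero_le, true_and]
        refine ⟨Nat.le_floor ?_, a⟩
        exact_mod_cast c.le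
      · intro p hp _
        exact Real.log_natCast_nonneg p
    have h2 : ∀ p ∈ S, (1 : ℝ) / p ≤ Real.log p / (2 ^ j * (j * Real.log 2)) := by
      intro p hp
      obtain ⟨a, b, c⟩ := hS' p hp
      have hb : (2 : ℝ) ^ j ≤ p := by exact_mod_cast b
      have hp0 : (0 : ℝ) < p := lt_of_lt_of_le (by positivity) hb
      rw [div_le_div_iff₀ hp0 (by positivity), one_mul, mul_comm (Real.log p)]
      apply mul_le_mul hb _ (by positivity) hp0.le
      rw [← Real.log_pow]
      exact Real.log_le_log (by positivity) hb
    calc _ ≤ ∑ p ∈ S, Real.log p / (2 ^ j * (j * Real.log 2)) := Finset.sum_le_sum h2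
      _ = (∑ p ∈ S, Real.log p) / (2 ^ j * (j * Real.log 2)) := by rw [Finset.sum_div]
      _ ≤ (Real.log 4 * 2 ^ (j + 1)) / (2 ^ j * (j * Real.log 2)) := by gcongr
      _ = 4 / j := by
        rw [show (4 : ℝ) = 2 ^ 2 by norm_num, Real.log_pow, pow_succ]
        field_simp
        norm_num
  · intro p hp
    simp only [Finset.mem_filter, Finset.mem_range] at hp
    rw [Finset.mem_Icc]
    constructor
    · exact Nat.le_log_of_pow_le (by norm_num) hp.2.2.le
    · exact Nat.lt_succ_iff.1 (Nat.log_lt_of_lt_pow hp.2.1.ne_zero hp.1)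

lemma harm_bound (m i : ℕ) (hm : 2 ≤ m) (hi : m ≤ i + 1) :
    ∑ j ∈ Finset.Icc m i, (1 : ℝ) / j ≤ Real.log (i / (m - 1 : ℝ)) := by
  have hm1 : (0 : ℝ) < m - 1 := by
    have : (2 : ℝ) ≤ m := by exact_mod_cast hm
    linarith
  induction i with
  | zero => omega
  | succ i ih =>
    rcases Nat.lt_or_ge i (m - 1) with h | h
    · have : m = i + 2 := by omega
      subst this
      rw [Finset.Icc_eq_empty (by omega)]
      apply Real.log_nonneg
      rw [le_div_iff₀ hm1]
      push_cast; linarith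
    · have ih := ih (by omega)
      have hi0 : (0 : ℝ) < i := by exact_mod_cast (by omega : 0 < i)
      rw [Finset.sum_Icc_succ_top (by omega)]
      have h1 : Real.log (((i + 1 : ℕ) : ℝ) / (m - 1)) = Real.log (i / (m - 1 : ℝ)) - Real.log (i / (i + 1 : ℝ)) := by
        rw [← Real.log_div (by positivity) (by positivity)]
        congr 1
        push_cast
        field_simp
      have h2 : Real.log (i / (i + 1 : ℝ)) ≤ i / (i + 1 : ℝ) - 1 := Real.log_le_sub_one_of_pos (by positivity)
      have h3 : (i : ℝ) / (i + 1) - 1 = - (1 / ((i + 1 : ℕ) : ℝ)) := by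
        push_cast; field_simp; ring
      rw [h1]
      linarith

def roughSet (m X : ℕ) : Finset ℕ :=
  ((Finset.range X).filter (fun w => w ≠ 0 ∧ ∀ p ∈ w.primeFactors, 2 ^ m < p))

lemma rough_recip (m i : ℕ) (hm : 2 ≤ m) (hi : m ≤ i + 1) :
    ∑ k ∈ roughSet m (2 ^ (i + 1)), (1 : ℝ) / k ≤ (i / (m - 1 : ℝ)) ^ 8 := by
  set s := (Finset.range (2 ^ (i + 1))).filter (fun p => p.Prime ∧ 2 ^ m < p) with hs
  let f : ℕ →* ℝ := 
    { toFun := fun k => (1 : ℝ) / k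
      map_one' := by simp
      map_mul' := by intro a b; push_cast; rw [one_div_mul_one_div] }
  have hf := EulerProduct.summable_and_hasSum_factoredNumbers_prod_filter_prime_geometric (f := f)
    (by
      intro p hp
      change ‖(1 : ℝ) / p‖ < 1
      have : (1 : ℝ) < p := by exact_mod_cast hp.one_lt
      rw [Real.norm_of_nonneg (by positivity), div_lt_one (by linarith)]
      exact this) s
  have h1 : ∑ k ∈ roughSet m (2 ^ (i + 1)), (1 : ℝ) / k ≤ ∏ p ∈ s with p.Prime, (1 - f p)⁻¹ := by
    have hmem : ∀ k ∈ roughSet m (2 ^ (i + 1)), k ∈ Nat.factoredNumbers s := by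
      intro k hk
      simp only [roughSet, Finset.mem_filter, Finset.mem_range] at hk
      rw [Nat.mem_factoredNumbers_iff_primeFactors_subset]
      refine ⟨hk.2.1, fun p hp => ?_⟩
      simp only [hs, Finset.mem_filter, Finset.mem_range]
      refine ⟨lt_of_le_of_lt (Nat.le_of_mem_primeFactors hp) hk.1, Nat.prime_of_mem_primeFactors hp,
        hk.2.2 p hp⟩
    have h2 := sum_le_hasSum ((roughSet m (2 ^ (i + 1))).subtype (· ∈ Nat.factoredNumbers s))
      (fun k _ => by change (0 : ℝ) ≤ 1 / _; positivity) hf.2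
    refine le_trans (le_of_eq ?_) h2
    rw [Finset.sum_subtype_of_mem (f := fun k : ℕ => f k) hmem]
    rfl
  refine h1.trans ?_
  have h3 : ∏ p ∈ s with p.Prime, (1 - f p)⁻¹ ≤ ∏ p ∈ s with p.Prime, Real.exp (2 * (1 / p)) := by
    apply Finset.prod_le_prod
    · intro p hp
      simp only [Finset.mem_filter] at hp
      change (0 : ℝ) ≤ (1 - 1 / (p : ℝ))⁻¹
      have : (2 : ℝ) ≤ p := by exact_mod_cast hp.2.two_le
      have : (1 : ℝ) / p ≤ 1 := by rw [div_le_one (by linarith)]; linarith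
      rw [inv_nonneg]; linarith
    · intro p hp
      simp only [Finset.mem_filter] at hp
      change (1 - 1 / (p : ℝ))⁻¹ ≤ _
      have h2 : (2 : ℝ) ≤ p := by exact_mod_cast hp.2.two_le
      have h0 : (0 : ℝ) < 1 / p := by positivity
      have h4 : (1 : ℝ) / p ≤ 1 / 2 := by gcongr
      set t := (1 : ℝ) / p
      have h5 := Real.add_one_le_exp (2 * t)
      refine le_trans ?_ h5
      rw [inv_le_iff_one_le_mul₀ (by linarith)]
      nlinarith
  refine h3.trans ?_
  have h4 : s.filter Nat.Prime = s := by
    apply Finset.filter_true_of_mem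
    intro p hp
    simp only [hs, Finset.mem_filter] at hp
    exact hp.2.1
  rw [h4, ← Real.exp_sum, ← Finset.mul_sum]
  have h5 := sum_inv_primes m i (by omega)
  have h6 := harm_bound m i hm hi
  have h7 : ∑ j ∈ Finset.Icc m i, (4 : ℝ) / j = 4 * ∑ j ∈ Finset.Icc m i, (1 : ℝ) / j := by
    rw [Finset.mul_sum]
    apply Finset.sum_congr rfl
    intro j _
    ring
  have hm1 : (0 : ℝ) < m - 1 := by
    have : (2 : ℝ) ≤ m := by exact_mod_cast hm
    linarith
  have hi0 : (0 : ℝ) < i := by exact_mod_cast (by omega : 0 < i)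
  rw [← Real.exp_log (show 0 < (i / (m - 1 : ℝ)) ^ 8 by positivity), Real.log_pow]
  apply Real.exp_le_exp.2
  push_cast
  linarith

open ArithmeticFunction in
lemma rough_count (m i : ℕ) (hm : 2 ≤ m) (hi : m ≤ i + 1) :
    (((roughSet m (2 ^ (i + 1))).filter (fun w => 2 ^ i ≤ w)).card : ℝ) * i ≤
      24 * 2 ^ i * (i / (m - 1 : ℝ)) ^ 8 := by
  set X := 2 ^ (i + 1) with hX
  set R := roughSet m X with hR
  set W := R.filter (fun w => 2 ^ i ≤ w) with hW
  have memR : ∀ w, w ∈ R ↔ w < X ∧ w ≠ 0 ∧ ∀ p ∈ w.primeFactors, 2 ^ m < p := by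
    intro w
    simp [hR, roughSet]
  have h1 : (W.card : ℝ) * (i * Real.log 2) ≤ ∑ w ∈ W, Real.log w := by
    rw [← nsmul_eq_mul, ← Finset.sum_const]
    apply Finset.sum_le_sum
    intro w hw
    rw [← Real.log_pow]
    apply Real.log_le_log (by positivity)
    simp only [hW, Finset.mem_filter] at hw
    exact_mod_cast hw.2
  have h2 : ∑ w ∈ W, Real.log w = ∑ e ∈ W.biUnion (fun w => w.divisorsAntidiagonal), vonMangoldt e.2 := by
    rw [Finset.sum_biUnion]
    · apply Finset.sum_congr rfl
      intro w _
      rw [Nat.sum_divisorsAntidiagonal' (f := fun _ d => vonMangoldt d), vonMangoldt_sum]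
    · intro a _ b _ hab
      rw [Function.onFun, Finset.disjoint_left]
      intro e he he'
      rw [Nat.mem_divisorsAntidiagonal] at he he'
      exact hab (he.1.symm.trans he'.1)
  have h3 : ∑ e ∈ W.biUnion (fun w => w.divisorsAntidiagonal), vonMangoldt e.2 ≤
      ∑ e ∈ R.sigma (fun k => Finset.Ioc 0 ⌊(X : ℝ) / k⌋₊), vonMangoldt e.2 := by
    let g : ℕ × ℕ → (_ : ℕ) × ℕ := fun e => ⟨e.1, e.2⟩
    have hg : Set.InjOn g (W.biUnion (fun w => w.divisorsAntidiagonal)) := by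
      rintro ⟨a, b⟩ _ ⟨c, d⟩ _ h
      simpa [g] using h
    calc _ = ∑ e ∈ (W.biUnion (fun w => w.divisorsAntidiagonal)).image g, vonMangoldt e.2 := by
          rw [Finset.sum_image hg]
      _ ≤ _ := by
          apply Finset.sum_le_sum_of_subset_of_nonneg
          · intro e he
            simp only [Finset.mem_image, Finset.mem_biUnion, Prod.exists] at he
            obtain ⟨k, d, ⟨w, hw, hkd⟩, rfl⟩ := he
            rw [Nat.mem_divisorsAntidiagonal] at hkd
            obtain ⟨rfl, h0⟩ := hkd
            have hw := (memR _).1 (Finset.mem_filter.1 hw).1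
            have hk0 : k ≠ 0 := by rintro rfl; simp at h0
            have hd0 : d ≠ 0 := by rintro rfl; simp at h0
            simp only [g, Finset.mem_sigma, Finset.mem_Ioc]
            refine ⟨(memR _).2 ⟨?_, hk0, ?_⟩, Nat.pos_of_ne_zero hd0, Nat.le_floor ?_⟩
            · exact lt_of_le_of_lt (Nat.le_mul_of_pos_right k (Nat.pos_of_ne_zero hd0)) hw.1
            · intro p hp
              exact hw.2.2 p (Nat.primeFactors_mono (Dvd.intro d rfl) h0 hp)
            · rw [le_div_iff₀ (by exact_mod_cast Nat.pos_of_ne_zero hk0), mul_comm]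
              exact_mod_cast hw.1.le
          · intro e _ _
            exact vonMangoldt_nonneg
  have h4 : ∑ e ∈ R.sigma (fun k => Finset.Ioc 0 ⌊(X : ℝ) / k⌋₊), vonMangoldt e.2 ≤
      ∑ k ∈ R, 6 * X * ((1 : ℝ) / k) := by
    rw [Finset.sum_sigma]
    apply Finset.sum_le_sum
    intro k hk
    have := Chebyshev.psi_le_const_mul_self (x := (X : ℝ) / k) (by positivity)
    refine this.trans ?_
    have hl : Real.log 4 ≤ 2 := by
      rw [show (4 : ℝ) = 2 ^ 2 by norm_num, Real.log_pow]
      have := Real.log_two_lt_d9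
      push_cast; linarith
    rw [show (6 : ℝ) * X * (1 / k) = 6 * (X / k) by ring]
    gcongr
    linarith
  rw [← Finset.mul_sum] at h4
  have h5 := rough_recip m i hm hi
  have h6 : (6 : ℝ) * X * ∑ k ∈ R, (1 : ℝ) / k ≤ 6 * X * (i / (m - 1 : ℝ)) ^ 8 := by gcongr
  have h7 : (X : ℝ) = 2 * 2 ^ i := by rw [hX]; push_cast; ring
  have h8 : (W.card : ℝ) * (i * Real.log 2) ≤ 12 * 2 ^ i * (i / (m - 1 : ℝ)) ^ 8 := by
    have h10 := h1.trans (h2.le.trans (h3.trans (h4.trans h6)))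
    rw [h7] at h10
    linarith
  have hl2 : 1 / 2 ≤ Real.log 2 := by linarith [Real.log_two_gt_d9]
  have h9 : (W.card : ℝ) * i * (1 / 2) ≤ (W.card : ℝ) * i * Real.log 2 := by gcongr
  nlinarith

lemma sidon2 {A : Finset ℕ} (h : MulSidonK 2 A) (a b c d : ℕ) (ha : a ∈ A) (hb : b ∈ A)
    (hc : c ∈ A) (hd : d ∈ A) (h1 : a ≠ b) (h2 : a ≠ c) (h3 : a ≠ d) (h4 : b ≠ c) (h5 : b ≠ d)
    (h6 : c ≠ d) (he : a * b = c * d) : False := by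
  refine h ⟨![a, b], ![c, d], ?_, ?_, ?_, ?_⟩
  · intro i; fin_cases i <;> simpa
  · intro i; fin_cases i <;> simpa
  · rw [Sum.elim_injective]
    refine ⟨?_, ?_, ?_⟩
    · intro i j hij; fin_cases i <;> fin_cases j <;> simp_all
    · intro i j hij; fin_cases i <;> fin_cases j <;> simp_all
    · intro i j; fin_cases i <;> fin_cases j <;> simp_all
  · simpa [Fin.prod_univ_two] using he

lemma sidon3 {A : Finset ℕ} (h : MulSidonK 3 A) (a b c d e f : ℕ) (ha : a ∈ A) (hb : b ∈ A)
    (hc : c ∈ A) (hd : d ∈ A) (he : e ∈ A) (hf : f ∈ A)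
    (hab : a ≠ b) (hac : a ≠ c) (hbc : b ≠ c) (hde : d ≠ e) (hdf : d ≠ f) (hef : e ≠ f)
    (had : a ≠ d) (hae : a ≠ e) (haf : a ≠ f) (hbd : b ≠ d) (hbe : b ≠ e) (hbf : b ≠ f)
    (hcd : c ≠ d) (hce : c ≠ e) (hcf : c ≠ f) (hE : a * b * c = d * e * f) : False := by
  refine h ⟨![a, b, c], ![d, e, f], ?_, ?_, ?_, ?_⟩
  · intro i; fin_cases i <;> simpa
  · intro i; fin_cases i <;> simpa
  · rw [Sum.elim_injective]
    refine ⟨?_, ?_, ?_⟩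
    · intro i j hij; fin_cases i <;> fin_cases j <;> simp_all
    · intro i j hij; fin_cases i <;> fin_cases j <;> simp_all
    · intro i j; fin_cases i <;> fin_cases j <;> simp_all
  · simpa [Fin.prod_univ_three] using hE

lemma reduction (n : ℕ) (M : ℝ)
    (h2 : ∀ A : Finset ℕ, A ⊆ Finset.Icc 1 n → MulSidonK 2 A → (A.card : ℝ) ≤ M)
    (h3 : ∀ A : Finset ℕ, A ⊆ Finset.Icc 1 n → MulSidonK 3 A → (A.card : ℝ) ≤ M) (j : ℕ) :
    ∀ A : Finset ℕ, A ⊆ Finset.Icc 1 n → MulSidonK (3 + 2 * j) A → (A.card : ℝ) ≤ M + 4 * j := by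
  induction j with
  | zero => intro A hA h; simpa using h3 A hA h
  | succ j ih =>
    intro A hA h
    by_cases h22 : MulSidonK 2 A
    · have := h2 A hA h22
      push_cast
      have : (0 : ℝ) ≤ j := by positivity
      linarith
    · unfold MulSidonK at h22
      push Not at h22
      obtain ⟨s, t, hs, ht, hi, hp⟩ := h22
      set Q : Finset ℕ := Finset.univ.image (Sum.elim s t) with hQ
      have hQc : Q.card ≤ 4 := by
        refine Finset.card_image_le.trans ?_
        simp
      have hsQ : ∀ i, s i ∈ Q := fun i => Finset.mem_image.2 ⟨Sum.inl i, Finset.mem_univ _, rfl⟩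
      have htQ : ∀ i, t i ∈ Q := fun i => Finset.mem_image.2 ⟨Sum.inr i, Finset.mem_univ _, rfl⟩
      have hS : MulSidonK (3 + 2 * j) (A \ Q) := by
        rintro ⟨s', t', hs', ht', hi', hp'⟩
        have key : MulSidonK (3 + 2 * j + 2) A := h
        refine key ⟨Fin.append s' s, Fin.append t' t, ?_, ?_, ?_, ?_⟩
        · intro i
          refine Fin.addCases (fun i => ?_) (fun i => ?_) i
          · simpa using (Finset.mem_sdiff.1 (hs' i)).1
          · simpa using hs i
        · intro i
          refine Fin.addCases (fun i => ?_) (fun i => ?_) i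
          · simpa using (Finset.mem_sdiff.1 (ht' i)).1
          · simpa using ht i
        · rw [Sum.elim_injective] at hi hi' ⊢
          have ns : ∀ i, s' i ∉ Q := fun i => (Finset.mem_sdiff.1 (hs' i)).2
          have nt : ∀ i, t' i ∉ Q := fun i => (Finset.mem_sdiff.1 (ht' i)).2
          refine ⟨?_, ?_, ?_⟩
          · rw [Fin.append_injective_iff]
            exact ⟨hi'.1, hi.1, fun i j e => ns i (e ▸ hsQ j)⟩
          · rw [Fin.append_injective_iff]
            exact ⟨hi'.2.1, hi.2.1, fun i j e => nt i (e ▸ htQ j)⟩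
          · intro a b
            refine Fin.addCases (fun a => ?_) (fun a => ?_) a <;>
            refine Fin.addCases (fun b => ?_) (fun b => ?_) b
            · simpa using hi'.2.2 a b
            · simpa using fun e : s' a = t b => ns a (e ▸ htQ b)
            · simpa using fun e : s a = t' b => nt b (e ▸ hsQ a)
            · simpa using hi.2.2 a b
        · rw [Fin.prod_univ_add (f := Fin.append s' s), Fin.prod_univ_add (f := Fin.append t' t)]
          simp only [Fin.append_left, Fin.append_right]
          rw [hp, hp']
      have h5 := ih (A \ Q) (Finset.sdiff_subset.trans hA) hS
      have h6 : A.card ≤ (A \ Q).card + Q.card := by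
        have := Finset.le_card_sdiff Q A
        omega
      have h7 : (A.card : ℝ) ≤ (A \ Q).card + 4 := by exact_mod_cast h6.trans (by omega)
      push_cast
      linarith

/-- The bipartite graph attached to a choice of divisors. -/
def gr (w : ℕ → ℕ) (B : Finset ℕ) : Finset (ℕ × ℕ) := B.image (fun a => (w a, a / w a))

lemma gr_mem {w : ℕ → ℕ} {B : Finset ℕ} (hw : ∀ a ∈ B, w a ∣ a) {x y : ℕ} (h : (x, y) ∈ gr w B) :
    x * y ∈ B ∧ w (x * y) = x := by
  unfold gr at h
  rw [Finset.mem_image] at h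
  obtain ⟨a, ha, he⟩ := h
  rw [Prod.mk.injEq] at he
  obtain ⟨rfl, rfl⟩ := he
  rw [Nat.mul_div_cancel' (hw a ha)]
  exact ⟨ha, rfl⟩

lemma gr_card {w : ℕ → ℕ} {B : Finset ℕ} (hw : ∀ a ∈ B, w a ∣ a) : (gr w B).card = B.card := by
  unfold gr
  apply Finset.card_image_of_injOn
  intro a ha b hb h
  simp only [Prod.mk.injEq] at h
  rw [← Nat.mul_div_cancel' (hw a ha), ← Nat.mul_div_cancel' (hw b hb), h.2, h.1]

lemma gr_ne {w : ℕ → ℕ} {B : Finset ℕ} (hw : ∀ a ∈ B, w a ∣ a) (h0 : 0 ∉ B) {x y x' y' : ℕ}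
    (h : (x, y) ∈ gr w B) (h' : (x', y') ∈ gr w B) (hne : x ≠ x' ∨ y ≠ y') : x * y ≠ x' * y' := by
  intro he
  have h1 := gr_mem hw h
  have h2 := gr_mem hw h'
  have hx : x = x' := by rw [← h1.2, ← h2.2, he]
  subst hx
  rcases hne with hne | hne
  · exact hne rfl
  · have : x ≠ 0 := by rintro rfl; simp at h1; exact h0 h1.1
    exact hne (Nat.eq_of_mul_eq_mul_left (Nat.pos_of_ne_zero this) he)

lemma gr_c6 {w : ℕ → ℕ} {A B : Finset ℕ} (hBA : B ⊆ A) (h0 : 0 ∉ A) (hw : ∀ a ∈ B, w a ∣ a)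
    (hA : MulSidonK 3 A) : C6Free (gr w B) := by
  intro x1 x2 x3 y1 y2 y3 h1 h2 h3 h4 h5 h6 e1 e2 e3 e4 e5 e6
  have m := fun {x y : ℕ} (h : (x, y) ∈ gr w B) => hBA (gr_mem hw h).1
  have h0' : 0 ∉ B := fun h => h0 (hBA h)
  have ne := fun {x y x' y' : ℕ} (h : (x, y) ∈ gr w B) (h' : (x', y') ∈ gr w B) => gr_ne hw h0' h h'
  refine sidon3 hA (x1 * y1) (x2 * y2) (x3 * y3) (x2 * y1) (x3 * y2) (x1 * y3) (m e1) (m e3) (m e5)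
    (m e2) (m e4) (m e6) (ne e1 e3 ?_) (ne e1 e5 ?_) (ne e3 e5 ?_) (ne e2 e4 ?_) (ne e2 e6 ?_)
    (ne e4 e6 ?_) (ne e1 e2 ?_) (ne e1 e4 ?_) (ne e1 e6 ?_) (ne e3 e2 ?_) (ne e3 e4 ?_)
    (ne e3 e6 ?_) (ne e5 e2 ?_) (ne e5 e4 ?_) (ne e5 e6 ?_) (by ring) <;> tauto

lemma gr_c4 {w : ℕ → ℕ} {A B : Finset ℕ} (hBA : B ⊆ A) (h0 : 0 ∉ A) (hw : ∀ a ∈ B, w a ∣ a)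
    (hA : MulSidonK 2 A) : C4Free (gr w B) := by
  intro x1 x2 y1 y2 h1 h2 e1 e2 e3 e4
  have m := fun {x y : ℕ} (h : (x, y) ∈ gr w B) => hBA (gr_mem hw h).1
  have h0' : 0 ∉ B := fun h => h0 (hBA h)
  have ne := fun {x y x' y' : ℕ} (h : (x, y) ∈ gr w B) (h' : (x', y') ∈ gr w B) => gr_ne hw h0' h h'
  refine sidon2 hA (x1 * y1) (x2 * y2) (x2 * y1) (x1 * y2) (m e1) (m e3) (m e2) (m e4)
    (ne e1 e3 ?_) (ne e1 e2 ?_) (ne e1 e4 ?_) (ne e3 e2 ?_) (ne e3 e4 ?_) (ne e2 e4 ?_) (by ring)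
    <;> tauto

/-- primes up to `m` -/
def prs (m : ℕ) : Finset ℕ := (Finset.range (m + 1)).filter Nat.Prime

lemma prs_card (m : ℕ) : (prs m).card = Nat.primeCounting m := by
  rw [Nat.primeCounting, Nat.primeCounting', Nat.count_eq_card_filter_range]; rfl

lemma mem_prs (m p : ℕ) : p ∈ prs m ↔ p ≤ m ∧ p.Prime := by
  simp [prs, Nat.lt_succ_iff]

lemma cof_bound {n T : ℝ} {p y : ℕ} (hn : 0 < n) (hT : T ^ 3 = n) (h1 : n ^ 2 < (p : ℝ) ^ 3)
    (h2 : (p : ℝ) * y ≤ n) (hT0 : 0 < T) : (y : ℝ) ≤ T := by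
  have hp : T ^ 2 < p := by
    apply lt_of_pow_lt_pow_left₀ 3 (by positivity)
    calc _ = (T ^ 3) ^ 2 := by ring
      _ < _ := by rw [hT]; exact h1
  by_contra h
  push Not at h
  have : T ^ 2 * T < p * y := by gcongr
  nlinarith

lemma large_common {n : ℕ} {T : ℝ} (hn : 0 < n) (hT0 : 0 < T) (hT : T ^ 3 = n) {B : Finset ℕ}
    {w : ℕ → ℕ} {m : ℕ} (hB : B ⊆ Finset.Icc 1 n)
    (hw : ∀ a ∈ B, (w a).Prime ∧ w a ∣ a ∧ n ^ 2 < (w a) ^ 3) (hm : ∀ a ∈ B, w a ≤ m) :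
    gr w B ⊆ prs m ×ˢ Finset.Icc 1 ⌊T⌋₊ := by
  intro e he
  unfold gr at he
  rw [Finset.mem_image] at he
  obtain ⟨a, ha, rfl⟩ := he
  have h1 := hw a ha
  have h2 := Finset.mem_Icc.1 (hB ha)
  rw [Finset.mem_product, mem_prs, Finset.mem_Icc]
  refine ⟨⟨hm a ha, h1.1⟩, Nat.div_pos (Nat.le_of_dvd h2.1 h1.2.1) h1.1.pos, Nat.le_floor ?_⟩
  refine cof_bound (n := n) (p := w a) (by exact_mod_cast hn) hT (by exact_mod_cast h1.2.2) ?_ hT0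
  have := Nat.mul_div_cancel' h1.2.1
  have h3 : w a * (a / w a) ≤ n := by omega
  exact_mod_cast h3

lemma floor_sq {T : ℝ} (hT0 : 0 < T) : ((⌊T⌋₊ : ℕ) : ℝ) ^ 2 ≤ T ^ 2 := by
  have := Nat.floor_le hT0.le
  gcongr

lemma large2 {n : ℕ} {T : ℝ} (hn : 0 < n) (hT0 : 0 < T) (hT : T ^ 3 = n) {A B : Finset ℕ}
    (hA : MulSidonK 2 A) (hBA : B ⊆ A) (hAn : A ⊆ Finset.Icc 1 n)
    (hw : ∀ a ∈ B, ∃ p : ℕ, p.Prime ∧ p ∣ a ∧ n ^ 2 < p ^ 3) :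
    (B.card : ℝ) ≤ Nat.primeCounting n + T ^ 2 := by
  choose! w hw using hw
  have h0 : 0 ∉ A := fun h => by simpa using hAn h
  have hd : ∀ a ∈ B, w a ∣ a := fun a ha => (hw a ha).2.1
  have := c4_prime_bound (gr w B) (gr_c4 hBA h0 hd hA) (prs n) (Finset.Icc 1 ⌊T⌋₊)
    (large_common hn hT0 hT (hBA.trans hAn) hw (fun a ha => by
      have := Finset.mem_Icc.1 (hAn (hBA ha))
      exact (Nat.le_of_dvd this.1 (hd a ha)).trans this.2))
  rw [gr_card hd, prs_card, Nat.card_Icc, Nat.add_sub_cancel] at this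
  have h2 : (B.card : ℝ) ≤ Nat.primeCounting n + ((⌊T⌋₊ : ℕ) : ℝ) ^ 2 := by exact_mod_cast this
  linarith [floor_sq hT0]

lemma large3 {n : ℕ} {T : ℝ} (hn : 0 < n) (hT0 : 0 < T) (hT : T ^ 3 = n) {A B : Finset ℕ}
    (hA : MulSidonK 3 A) (hBA : B ⊆ A) (hAn : A ⊆ Finset.Icc 1 n)
    (hw : ∀ a ∈ B, ∃ p : ℕ, p.Prime ∧ p ∣ a ∧ n ^ 2 < p ^ 3) :
    (B.card : ℝ) ≤ Nat.primeCounting n + Nat.primeCounting (n / 2) + 2 * T ^ 2 := by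
  choose! w hw using hw
  have h0 : 0 ∉ A := fun h => by simpa using hAn h
  set B1 := B.filter (fun a => w a ≤ n / 2) with hB1
  set B2 := B.filter (fun a => ¬ w a ≤ n / 2) with hB2
  have hc : B1.card + B2.card = B.card := Finset.card_filter_add_card_filter_not _
  have hs1 : B1 ⊆ B := Finset.filter_subset _ _
  have hd : ∀ a ∈ B1, w a ∣ a := fun a ha => (hw a (hs1 ha)).2.1
  have := c6_prime_bound (gr w B1) (gr_c6 (hs1.trans hBA) h0 hd hA) (prs (n / 2))
    (Finset.Icc 1 ⌊T⌋₊)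
    (large_common hn hT0 hT (hs1.trans (hBA.trans hAn)) (fun a ha => hw a (hs1 ha))
      (fun a ha => (Finset.mem_filter.1 ha).2))
  rw [gr_card hd, prs_card, Nat.card_Icc, Nat.add_sub_cancel] at this
  have h2 : (B1.card : ℝ) ≤ 2 * Nat.primeCounting (n / 2) + 2 * ((⌊T⌋₊ : ℕ) : ℝ) ^ 2 := by
    exact_mod_cast this
  have h3 : B2.card + Nat.primeCounting (n / 2) ≤ Nat.primeCounting n := by
    have key : ∀ a ∈ B2, n / 2 < a ∧ a ≤ n ∧ a.Prime := by
      intro a ha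
      obtain ⟨ha, h1⟩ := Finset.mem_filter.1 ha
      obtain ⟨hp, hdv, -⟩ := hw a ha
      have h2 := Finset.mem_Icc.1 (hAn (hBA ha))
      obtain ⟨c, hc⟩ := hdv
      have hc0 : c ≠ 0 := by rintro rfl; omega
      have hc1 : c < 2 := by
        by_contra h
        push Not at h
        have : w a * 2 ≤ w a * c := Nat.mul_le_mul_left _ h
        omega
      have hc2 : c = 1 := by omega
      subst hc2
      rw [mul_one] at hc
      rw [← hc] at hp h1
      exact ⟨by omega, h2.2, hp⟩
    rw [← prs_card, ← prs_card, ← Finset.card_union_of_disjoint]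
    · apply Finset.card_le_card
      intro a ha
      rw [Finset.mem_union] at ha
      rw [mem_prs]
      rcases ha with ha | ha
      · exact (key a ha).2
      · rw [mem_prs] at ha
        exact ⟨by omega, ha.2⟩
    · rw [Finset.disjoint_left]
      intro a ha hb
      rw [mem_prs] at hb
      have := (key a ha).1
      omega
  have h3' : (B2.card : ℝ) + Nat.primeCounting (n / 2) ≤ Nat.primeCounting n := by exact_mod_cast h3
  have hc' : (B1.card : ℝ) + B2.card = B.card := by exact_mod_cast hc
  linarith [floor_sq hT0]

lemma small_part {n : ℕ} {T : ℝ} (hT1 : 1 ≤ T) (hT : T ^ 3 = n) {B : Finset ℕ}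
    (hB : B ⊆ Finset.Icc 1 n) (h : ∀ a ∈ B, a ^ 2 < n) : (B.card : ℝ) ≤ T ^ 2 := by
  have : B ⊆ Finset.Icc 1 ⌊T ^ 2⌋₊ := by
    intro a ha
    rw [Finset.mem_Icc]
    refine ⟨(Finset.mem_Icc.1 (hB ha)).1, Nat.le_floor ?_⟩
    apply le_of_lt
    apply lt_of_pow_lt_pow_left₀ 2 (by positivity)
    have h1 : (a : ℝ) ^ 2 < n := by exact_mod_cast h a ha
    have h2 : T ^ 3 ≤ T ^ 4 := pow_le_pow_right₀ hT1 (by norm_num)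
    calc (a : ℝ) ^ 2 < T ^ 3 := by rw [hT]; exact h1
      _ ≤ T ^ 4 := h2
      _ = _ := by ring
  have h2 := Finset.card_le_card this
  rw [Nat.card_Icc, Nat.add_sub_cancel] at h2
  have h3 : (B.card : ℝ) ≤ (⌊T ^ 2⌋₊ : ℕ) := by exact_mod_cast h2
  exact h3.trans (Nat.floor_le (by positivity))

lemma scale {n : ℕ} {A B W : Finset ℕ} {w : ℕ → ℕ} {i : ℕ} (hA : MulSidonK 3 A) (hBA : B ⊆ A)
    (hAn : A ⊆ Finset.Icc 1 n) (hd : ∀ a ∈ B, w a ∣ a) (hW : ∀ a ∈ B, w a ∈ W)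
    (hi : ∀ a ∈ B, 2 ^ i ≤ w a) :
    (B.card : ℝ) ≤ 8 * ((W.card : ℝ) * (n / 2 ^ i)) ^ ((2 : ℝ) / 3) + 24 * W.card +
      24 * (n / 2 ^ i) := by
  have h0 : 0 ∉ A := fun h => by simpa using hAn h
  have h := c6_bound (gr w B) (gr_c6 hBA h0 hd hA) W (Finset.Icc 1 (n / 2 ^ i)) (by
    intro e he
    unfold gr at he
    rw [Finset.mem_image] at he
    obtain ⟨a, ha, rfl⟩ := he
    have h2 := Finset.mem_Icc.1 (hAn (hBA ha))
    rw [Finset.mem_product, Finset.mem_Icc]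
    have hwp : 0 < w a := Nat.pos_of_dvd_of_pos (hd a ha) h2.1
    refine ⟨hW a ha, Nat.div_pos (Nat.le_of_dvd h2.1 (hd a ha)) hwp, ?_⟩
    exact Nat.div_le_div h2.2 (hi a ha) (by positivity))
  rw [gr_card hd, Nat.card_Icc, Nat.add_sub_cancel] at h
  have h1 : ((n / 2 ^ i : ℕ) : ℝ) ≤ n / 2 ^ i := by
    have := @Nat.cast_div_le ℝ _ _ _ n (2 ^ i)
    simpa using this
  refine h.trans ?_
  gcongr

lemma fiber_sum {B : Finset ℕ} {f : ℕ → ℕ} {S : Finset ℕ} {b : ℕ → ℝ} (h : ∀ a ∈ B, f a ∈ S)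
    (hb : ∀ i ∈ S, ((B.filter (fun a => f a = i)).card : ℝ) ≤ b i) : (B.card : ℝ) ≤ ∑ i ∈ S, b i := by
  rw [Finset.card_eq_sum_card_fiberwise (f := f) (t := S) h]
  push_cast
  exact Finset.sum_le_sum hb

lemma A3_bound {n m : ℕ} {T : ℝ} (hn : 0 < n) (hT1 : 1 ≤ T) (hT : T ^ 3 = n)
    (hm : (4 : ℝ) ^ m ≤ T) {A B : Finset ℕ}
    (hA : MulSidonK 3 A) (hBA : B ⊆ A) (hAn : A ⊆ Finset.Icc 1 n)
    (hw : ∀ a ∈ B, ∃ w, w ∣ a ∧ n ≤ w ^ 2 ∧ w ^ 2 ≤ n * (2 ^ m) ^ 2) :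
    (B.card : ℝ) ≤ (m + 1) * (80 * T ^ 2) := by
  choose! w hw using hw
  have hT0 : 0 < T := by linarith
  have key : ∀ a ∈ B, Nat.log 2 (w a) ∈ Finset.Icc (Nat.log 4 n) (Nat.log 4 n + m) := by
    intro a ha
    obtain ⟨h1, h2, h3⟩ := hw a ha
    have hw0 : w a ≠ 0 := by intro h; rw [h] at h2; simp at h2; omega
    have e1 := Nat.pow_log_le_self 2 hw0
    have e2 := Nat.lt_pow_succ_log_self (b := 2) (by norm_num) (w a)
    have e3 := Nat.pow_log_le_self 4 hn.ne'
    have e4 := Nat.lt_pow_succ_log_self (b := 4) (by norm_num) n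
    have p4 : ∀ k, 4 ^ k = (2 ^ k) ^ 2 := by intro k; rw [← pow_mul, mul_comm, pow_mul]; norm_num
    rw [Finset.mem_Icc]
    constructor
    · have : 4 ^ (Nat.log 4 n) < 4 ^ ((Nat.log 2 (w a)) + 1) := by
        rw [p4 (Nat.log 2 (w a) + 1)]
        calc _ ≤ (w a) ^ 2 := e3.trans h2
          _ < _ := Nat.pow_lt_pow_left e2 (by norm_num)
      have := (Nat.pow_lt_pow_iff_right (by norm_num : 1 < 4)).1 this
      omega
    · have : 4 ^ (Nat.log 2 (w a)) < 4 ^ (Nat.log 4 n + 1 + m) := by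
        rw [p4 (Nat.log 2 (w a)), pow_add, p4 m]
        calc _ ≤ (w a) ^ 2 := Nat.pow_le_pow_left e1 2
          _ ≤ n * (2 ^ m) ^ 2 := h3
          _ < _ := by
            apply Nat.mul_lt_mul_of_pos_right e4; positivity
      have := (Nat.pow_lt_pow_iff_right (by norm_num : 1 < 4)).1 this
      omega
  have := fiber_sum (b := fun _ => 80 * T ^ 2) key (by
    intro i hi
    set F := B.filter (fun a => Nat.log 2 (w a) = i) with hF
    rcases F.eq_empty_or_nonempty with hE | ⟨a0, ha0⟩
    · rw [hE]; simp; positivity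
    have hFB : F ⊆ B := Finset.filter_subset _ _
    have hb : ∀ a ∈ F, 2 ^ i ≤ w a ∧ w a < 2 ^ (i + 1) := by
      intro a ha
      have hai := (Finset.mem_filter.1 ha).2
      replace ha := hFB ha
      rw [← hai]
      have hw0 : w a ≠ 0 := by
        intro h
        have h2 := (hw a ha).2.1
        rw [h] at h2; simp at h2; omega
      exact ⟨Nat.pow_log_le_self 2 hw0, Nat.lt_pow_succ_log_self (b := 2) (by norm_num) (w a)⟩
    have h := scale (W := Finset.Ico (2 ^ i) (2 ^ (i + 1))) (i := i) hA (hFB.trans hBA) hAn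
      (fun a ha => (hw a (hFB ha)).1) (fun a ha => Finset.mem_Ico.2 (hb a ha))
      (fun a ha => (hb a ha).1)
    have hc : (Finset.Ico (2 ^ i) (2 ^ (i + 1))).card = 2 ^ i := by
      rw [Nat.card_Ico, pow_succ]; omega
    rw [hc] at h
    push_cast at h
    have h2 : (2 : ℝ) ^ i * (n / 2 ^ i) = T ^ 3 := by rw [hT]; field_simp
    have h3 : (T ^ 3) ^ ((2 : ℝ) / 3) = T ^ 2 := by
      rw [← Real.rpow_natCast, ← Real.rpow_mul hT0.le, ← Real.rpow_natCast]; norm_num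
    rw [h2, h3] at h
    obtain ⟨g1, g2, g3⟩ := hw a0 (hFB ha0)
    obtain ⟨f1, f2⟩ := hb a0 ha0
    have f1' : (2 : ℝ) ^ i ≤ w a0 := by exact_mod_cast f1
    have f2' : (w a0 : ℝ) ≤ 2 * 2 ^ i := by
      have : w a0 ≤ 2 * 2 ^ i := by rw [pow_succ] at f2; omega
      exact_mod_cast this
    have g2' : T ^ 3 ≤ (w a0 : ℝ) ^ 2 := by rw [hT]; exact_mod_cast g2
    have g3' : (w a0 : ℝ) ^ 2 ≤ T ^ 3 * 4 ^ m := by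
      rw [hT, show (4 : ℝ) = 2 ^ 2 by norm_num, ← pow_mul, mul_comm 2 m, pow_mul]; exact_mod_cast g3
    have h4 : (w a0 : ℝ) ≤ T ^ 2 := by
      apply le_of_sq_le_sq _ (by positivity)
      calc (w a0 : ℝ) ^ 2 ≤ T ^ 3 * 4 ^ m := g3'
        _ ≤ T ^ 3 * T := by gcongr
        _ = _ := by ring
    have h5 : T ≤ w a0 := by
      apply le_of_sq_le_sq _ (by positivity)
      refine le_trans ?_ g2'
      exact pow_le_pow_right₀ hT1 (by norm_num)
    have h6 : (n : ℝ) / 2 ^ i ≤ 2 * T ^ 2 := by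
      rw [div_le_iff₀ (by positivity), ← hT]
      have : T ^ 2 * T ≤ T ^ 2 * (2 * 2 ^ i) := by gcongr; linarith
      nlinarith
    linarith)
  rw [Finset.sum_const, Nat.card_Icc, show Nat.log 4 n + m + 1 - Nat.log 4 n = m + 1 by omega,
    nsmul_eq_mul] at this
  exact_mod_cast this

lemma A4_bound {n m : ℕ} {T δ : ℝ} (hn : 0 < n) (hT1 : 1 ≤ T) (hT : T ^ 3 = n) (hδ0 : 0 ≤ δ)
    (hδ : ∀ i, Nat.log 8 n ≤ i → i ≤ Nat.log 8 (n ^ 2) →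
      (((roughSet m (2 ^ (i + 1))).filter (fun w => 2 ^ i ≤ w)).card : ℝ) ≤ δ * 2 ^ i)
    {A B : Finset ℕ}
    (hA : MulSidonK 3 A) (hBA : B ⊆ A) (hAn : A ⊆ Finset.Icc 1 n)
    (hw : ∀ a ∈ B, ∃ w, w ∣ a ∧ n ≤ w ^ 3 ∧ w ^ 3 ≤ n ^ 2 ∧ ∀ p, p.Prime → p ∣ w → 2 ^ m < p) :
    (B.card : ℝ) ≤ (Nat.log 8 (n ^ 2) + 1) * (8 * T ^ 2 * δ ^ ((2 : ℝ) / 3)) + 144 * T ^ 2 := by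
  choose! w hw using hw
  have hT0 : 0 < T := by linarith
  set i0 := Nat.log 8 n with hi0
  set i1 := Nat.log 8 (n ^ 2) with hi1
  have p8 : ∀ k, 8 ^ k = (2 ^ k) ^ 3 := by intro k; rw [← pow_mul, mul_comm, pow_mul]; norm_num
  have e3 := Nat.pow_log_le_self 8 (pow_pos hn 2).ne'
  have e4 := Nat.lt_pow_succ_log_self (b := 8) (by norm_num) n
  have key : ∀ a ∈ B, Nat.log 2 (w a) ∈ Finset.Icc i0 i1 := by
    intro a ha
    obtain ⟨h1, h2, h3, -⟩ := hw a ha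
    have hw0 : w a ≠ 0 := by intro h; rw [h] at h2; simp at h2; omega
    have e1 := Nat.pow_log_le_self 2 hw0
    have e2 := Nat.lt_pow_succ_log_self (b := 2) (by norm_num) (w a)
    rw [Finset.mem_Icc]
    constructor
    · have : n < 8 ^ ((Nat.log 2 (w a)) + 1) := by
        rw [p8]
        calc _ ≤ (w a) ^ 3 := h2
          _ < _ := Nat.pow_lt_pow_left e2 (by norm_num)
      have := Nat.log_lt_of_lt_pow hn.ne' this
      omega
    · apply Nat.le_log_of_pow_le (by norm_num)
      rw [p8]
      exact (Nat.pow_le_pow_left e1 3).trans h3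
  have main := fiber_sum (b := fun i => 8 * T ^ 2 * δ ^ ((2 : ℝ) / 3) + (24 * 2 ^ i + 24 * (n / 2 ^ i)))
    key (by
    intro i hi
    rw [Finset.mem_Icc] at hi
    set F := B.filter (fun a => Nat.log 2 (w a) = i) with hF
    have hFB : F ⊆ B := Finset.filter_subset _ _
    have hb : ∀ a ∈ F, w a ≠ 0 ∧ 2 ^ i ≤ w a ∧ w a < 2 ^ (i + 1) := by
      intro a ha
      have hai := (Finset.mem_filter.1 ha).2
      replace ha := hFB ha
      rw [← hai]
      have hw0 : w a ≠ 0 := by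
        intro h
        have h2 := (hw a ha).2.1
        rw [h] at h2; simp at h2; omega
      exact ⟨hw0, Nat.pow_log_le_self 2 hw0, Nat.lt_pow_succ_log_self (b := 2) (by norm_num) (w a)⟩
    set W := (roughSet m (2 ^ (i + 1))).filter (fun w => 2 ^ i ≤ w) with hW
    have h := scale (W := W) (i := i) hA (hFB.trans hBA) hAn
      (fun a ha => (hw a (hFB ha)).1) (fun a ha => by
        rw [hW, roughSet, Finset.mem_filter, Finset.mem_filter, Finset.mem_range]
        obtain ⟨b1, b2, b3⟩ := hb a ha
        refine ⟨⟨b3, b1, ?_⟩, b2⟩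
        intro p hp
        exact (hw a (hFB ha)).2.2.2 p (Nat.prime_of_mem_primeFactors hp)
          (Nat.dvd_of_mem_primeFactors hp))
      (fun a ha => (hb a ha).2.1)
    have hc : W.card ≤ 2 ^ i := by
      have : W ⊆ Finset.Ico (2 ^ i) (2 ^ (i + 1)) := by
        intro x hx
        rw [hW, roughSet, Finset.mem_filter, Finset.mem_filter, Finset.mem_range] at hx
        exact Finset.mem_Ico.2 ⟨hx.2, hx.1.1⟩
      have := Finset.card_le_card this
      rw [Nat.card_Ico, pow_succ] at this
      omega
    have hc' : (W.card : ℝ) ≤ 2 ^ i := by exact_mod_cast hc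
    have h1 : (W.card : ℝ) * (n / 2 ^ i) ≤ T ^ 3 * δ := by
      calc _ ≤ (δ * 2 ^ i) * ((n : ℝ) / 2 ^ i) := by
            gcongr
            exact hδ i hi.1 hi.2
        _ = _ := by rw [hT]; field_simp
    have h3 : (T ^ 3 * δ) ^ ((2 : ℝ) / 3) = T ^ 2 * δ ^ ((2 : ℝ) / 3) := by
      rw [Real.mul_rpow (by positivity) hδ0]
      congr 1
      rw [← Real.rpow_natCast, ← Real.rpow_mul hT0.le, ← Real.rpow_natCast]; norm_num
    have h4 : ((W.card : ℝ) * (n / 2 ^ i)) ^ ((2 : ℝ) / 3) ≤ T ^ 2 * δ ^ ((2 : ℝ) / 3) := by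
      rw [← h3]; gcongr
    linarith)
  refine main.trans ?_
  rw [Finset.sum_add_distrib, Finset.sum_const, Nat.card_Icc, nsmul_eq_mul, Finset.sum_add_distrib,
    ← Finset.mul_sum, ← Finset.mul_sum]
  have g1 : ∑ i ∈ Finset.Icc i0 i1, (2 : ℝ) ^ i ≤ 2 * T ^ 2 := by
    have h1 : (2 : ℝ) ^ i1 ≤ T ^ 2 := by
      apply le_of_pow_le_pow_left₀ (n := 3) (by norm_num) (by positivity)
      have : ((2 : ℝ) ^ i1) ^ 3 ≤ (n : ℝ) ^ 2 := by rw [p8] at e3; exact_mod_cast e3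
      refine this.trans ?_
      rw [← hT]; exact le_of_eq (by ring)
    have h2 : ∑ i ∈ Finset.Icc i0 i1, (2 : ℝ) ^ i ≤ ∑ i ∈ Finset.range (i1 + 1), (2 : ℝ) ^ i := by
      apply Finset.sum_le_sum_of_subset_of_nonneg
      · intro x hx; rw [Finset.mem_Icc] at hx; rw [Finset.mem_range]; omega
      · intros; positivity
    rw [geom_sum_eq (by norm_num), pow_succ] at h2
    linarith
  have g2 : ∑ i ∈ Finset.Icc i0 i1, (n : ℝ) / 2 ^ i ≤ 4 * T ^ 2 := by
    have h1 : (T : ℝ) ≤ 2 * 2 ^ i0 := by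
      apply le_of_pow_le_pow_left₀ (n := 3) (by norm_num) (by positivity)
      rw [p8] at e4
      have : (n : ℝ) ≤ (2 ^ (i0 + 1)) ^ 3 := by exact_mod_cast e4.le
      rw [hT]
      refine this.trans (le_of_eq (by ring))
    have h2 : ∀ k, ∑ i ∈ Finset.Ico i0 (i0 + k), (1 : ℝ) / 2 ^ i = 2 / 2 ^ i0 - 2 / 2 ^ (i0 + k) := by
      intro k
      induction k with
      | zero => simp
      | succ k ih =>
        rw [← add_assoc, Finset.sum_Ico_succ_top (by omega), ih, pow_succ]
        field_simp
        ring
    have h3 : ∑ i ∈ Finset.Icc i0 i1, (n : ℝ) / 2 ^ i ≤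
        n * ∑ i ∈ Finset.Ico i0 (i0 + (i1 + 1)), (1 : ℝ) / 2 ^ i := by
      rw [Finset.mul_sum]
      simp only [mul_one_div]
      apply Finset.sum_le_sum_of_subset_of_nonneg
      · intro x hx; rw [Finset.mem_Icc] at hx; rw [Finset.mem_Ico]; omega
      · intros; positivity
    refine h3.trans ?_
    rw [h2]
    have h4 : (0 : ℝ) ≤ 2 / 2 ^ (i0 + (i1 + 1)) := by positivity
    have h5 : (2 : ℝ) / 2 ^ i0 ≤ 4 / T := by
      rw [div_le_div_iff₀ (by positivity) hT0]; linarith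
    calc _ ≤ (n : ℝ) * (4 / T) := by gcongr; linarith
      _ = _ := by rw [← hT]; field_simp
  have g3 : ((i1 + 1 - i0 : ℕ) : ℝ) ≤ i1 + 1 := by
    have : i1 + 1 - i0 ≤ i1 + 1 := Nat.sub_le _ _
    exact_mod_cast this
  have g4 : ((i1 + 1 - i0 : ℕ) : ℝ) * (8 * T ^ 2 * δ ^ ((2 : ℝ) / 3)) ≤
      (i1 + 1) * (8 * T ^ 2 * δ ^ ((2 : ℝ) / 3)) := by gcongr
  linarith

lemma three_bound {n m : ℕ} {T δ : ℝ} (hn : 2 ≤ n) (hT1 : 1 ≤ T) (hT : T ^ 3 = n) (hδ0 : 0 ≤ δ)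
    (hm : (4 : ℝ) ^ m ≤ T)
    (hδ : ∀ i, Nat.log 8 n ≤ i → i ≤ Nat.log 8 (n ^ 2) →
      (((roughSet m (2 ^ (i + 1))).filter (fun w => 2 ^ i ≤ w)).card : ℝ) ≤ δ * 2 ^ i)
    {A : Finset ℕ} (hA : MulSidonK 3 A) (hAn : A ⊆ Finset.Icc 1 n) :
    (A.card : ℝ) ≤ Nat.primeCounting n + Nat.primeCounting (n / 2) +
      T ^ 2 * (147 + 80 * (m + 1) + (Nat.log 8 (n ^ 2) + 1) * (8 * δ ^ ((2 : ℝ) / 3))) := by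
  classical
  have hn0 : 0 < n := by omega
  set A1 := A.filter (fun a => ∃ p : ℕ, p.Prime ∧ p ∣ a ∧ n ^ 2 < p ^ 3) with hA1
  set A2 := A.filter (fun a => a ^ 2 < n) with hA2
  set A3 := A.filter (fun a => ∃ w, w ∣ a ∧ n ≤ w ^ 2 ∧ w ^ 2 ≤ n * (2 ^ m) ^ 2) with hA3
  set A4 := A.filter (fun a => ∃ w, w ∣ a ∧ n ≤ w ^ 3 ∧ w ^ 3 ≤ n ^ 2 ∧
    ∀ p, p.Prime → p ∣ w → 2 ^ m < p) with hA4
  have hsub : A ⊆ A1 ∪ A2 ∪ A3 ∪ A4 := by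
    intro a ha
    simp only [hA1, hA2, hA3, hA4, Finset.mem_union, Finset.mem_filter, ha, true_and]
    by_contra hcon
    push Not at hcon
    obtain ⟨⟨⟨h1, h2⟩, h3⟩, h4⟩ := hcon
    have ha0 : a ≠ 0 := by have := Finset.mem_Icc.1 (hAn ha); omega
    rcases classify n (2 ^ m) a hn ha0 h2 h1 with ⟨w, w1, w2, w3, w4⟩ | ⟨w, w1, w2, w3⟩
    · obtain ⟨p, p1, p2, p3⟩ := h4 w w1 w2 w3
      have := w4 p p1 p2
      omega
    · have := h3 w w1 w2
      omega
  have hcard : (A.card : ℝ) ≤ A1.card + A2.card + A3.card + A4.card := by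
    have := Finset.card_le_card hsub
    have c1 := Finset.card_union_le (A1 ∪ A2 ∪ A3) A4
    have c2 := Finset.card_union_le (A1 ∪ A2) A3
    have c3 := Finset.card_union_le A1 A2
    have : A.card ≤ A1.card + A2.card + A3.card + A4.card := by omega
    exact_mod_cast this
  have b1 := large3 hn0 (by linarith) hT (B := A1) hA (Finset.filter_subset _ _) hAn
    (fun a ha => (Finset.mem_filter.1 ha).2)
  have b2 := small_part hT1 hT (B := A2) ((Finset.filter_subset _ _).trans hAn)
    (fun a ha => (Finset.mem_filter.1 ha).2)
  have b3 := A3_bound hn0 hT1 hT hm (B := A3) hA (Finset.filter_subset _ _) hAn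
    (fun a ha => (Finset.mem_filter.1 ha).2)
  have b4 := A4_bound hn0 hT1 hT hδ0 hδ (B := A4) hA (Finset.filter_subset _ _) hAn
    (fun a ha => (Finset.mem_filter.1 ha).2)
  nlinarith

lemma two_rest {n : ℕ} {S : ℝ} (hn : 2 ≤ n) (hS1 : 1 ≤ S) (hS : S ^ 12 = n) {A B : Finset ℕ}
    (hA : MulSidonK 2 A) (hBA : B ⊆ A) (hAn : A ⊆ Finset.Icc 1 n)
    (h1 : ∀ a ∈ B, n ≤ a ^ 2) (h2 : ∀ a ∈ B, ∀ p, p.Prime → p ∣ a → p ^ 3 ≤ n ^ 2) :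
    (B.card : ℝ) ≤ 10 * S ^ 11 := by
  have hS0 : 0 < S := by linarith
  have step : ∀ a ∈ B, ∃ u, u ∣ a ∧ u ^ 2 ≤ n ∧ ((a / u : ℕ) : ℝ) ≤ S ^ 8 := by
    intro a ha
    have han := Finset.mem_Icc.1 (hAn (hBA ha))
    have hw : ∃ w, w ∣ a ∧ (w : ℝ) ≤ S ^ 8 ∧ S ^ 4 ≤ (w : ℝ) := by
      rcases classify n 1 a hn (by omega) (h1 a ha) (h2 a ha) with ⟨w, w1, w2, w3, -⟩ | ⟨w, w1, w2, w3⟩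
      · refine ⟨w, w1, ?_, ?_⟩
        · apply le_of_pow_le_pow_left₀ (n := 3) (by norm_num) (by positivity)
          have : (w : ℝ) ^ 3 ≤ (n : ℝ) ^ 2 := by exact_mod_cast w3
          rw [← hS] at this
          exact this.trans (le_of_eq (by ring))
        · apply le_of_pow_le_pow_left₀ (n := 3) (by norm_num) (by positivity)
          have : (n : ℝ) ≤ (w : ℝ) ^ 3 := by exact_mod_cast w2
          rw [← hS] at this
          exact le_trans (le_of_eq (by ring)) this
      · refine ⟨w, w1, ?_, ?_⟩
        · apply le_of_sq_le_sq _ (by positivity)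
          have : (w : ℝ) ^ 2 ≤ (n : ℝ) := by rw [one_pow, mul_one] at w3; exact_mod_cast w3
          rw [← hS] at this
          refine this.trans ?_
          rw [← pow_mul]
          exact pow_le_pow_right₀ hS1 (by norm_num)
        · apply le_of_sq_le_sq _ (by positivity)
          have : (n : ℝ) ≤ (w : ℝ) ^ 2 := by exact_mod_cast w2
          rw [← hS] at this
          refine le_trans ?_ this
          rw [← pow_mul]
          exact pow_le_pow_right₀ hS1 (by norm_num)
    obtain ⟨w, hwd, w1, w2⟩ := hw
    obtain ⟨v, hv⟩ := hwd
    have hwpos : 0 < w := by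
      rcases Nat.eq_zero_or_pos w with h | h
      · rw [h] at hv; omega
      · exact h
    have hvpos : 0 < v := by
      rcases Nat.eq_zero_or_pos v with h | h
      · rw [h] at hv; omega
      · exact h
    by_cases hc : w ^ 2 ≤ n
    · refine ⟨w, ⟨v, hv⟩, hc, ?_⟩
      rw [hv, Nat.mul_div_cancel_left _ hwpos]
      have h3 : (w : ℝ) * v ≤ S ^ 12 := by
        rw [hS]
        have : w * v ≤ n := by omega
        exact_mod_cast this
      by_contra hcon
      push Not at hcon
      have : S ^ 4 * S ^ 8 < w * v := by
        apply mul_lt_mul' w2 hcon (by positivity) (by positivity)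
      nlinarith
    · push Not at hc
      refine ⟨v, ⟨w, by rw [hv, mul_comm]⟩, ?_, ?_⟩
      · have h3 : w * v ≤ n := by omega
        have : v < w := by
          by_contra hcon
          push Not at hcon
          have : w * w ≤ w * v := Nat.mul_le_mul_left _ hcon
          nlinarith
        nlinarith
      · rw [hv, Nat.mul_div_cancel _ hvpos]
        exact w1
  choose! u hu using step
  have h0 : 0 ∉ A := fun h => by simpa using hAn h
  have hd : ∀ a ∈ B, u a ∣ a := fun a ha => (hu a ha).1
  have hc1 : S ^ 3 ≤ (⌈S ^ 3⌉₊ : ℕ) := Nat.le_ceil _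
  have hc2 : ((⌈S ^ 3⌉₊ : ℕ) : ℝ) ≤ 2 * S ^ 3 := by
    have := Nat.ceil_lt_add_one (a := S ^ 3) (by positivity)
    have h3 : 1 ≤ S ^ 3 := one_le_pow₀ hS1
    linarith
  have hf1 : S ^ 5 < ((⌊S ^ 5⌋₊ + 1 : ℕ) : ℝ) := by push_cast; exact Nat.lt_floor_add_one _
  have hf2 : ((⌊S ^ 5⌋₊ + 1 : ℕ) : ℝ) ≤ 2 * S ^ 5 := by
    have := Nat.floor_le (a := S ^ 5) (by positivity)
    have h3 : 1 ≤ S ^ 5 := one_le_pow₀ hS1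
    push_cast
    linarith
  have hq : ((Nat.sqrt n : ℕ) : ℝ) ≤ S ^ 6 := by
    apply le_of_sq_le_sq _ (by positivity)
    have : ((Nat.sqrt n : ℕ) : ℝ) ^ 2 ≤ n := by exact_mod_cast Nat.sqrt_le' n
    rw [← hS] at this
    exact this.trans (le_of_eq (by ring))
  have main := c4_block_bound (gr u B) (gr_c4 hBA h0 hd hA) (Finset.Icc 1 (Nat.sqrt n))
    (⌊S ^ 5⌋₊ + 1) ⌈S ^ 3⌉₊ (Nat.ceil_pos.2 (by positivity)) (by
      intro e he
      unfold gr at he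
      rw [Finset.mem_image] at he
      obtain ⟨a, ha, rfl⟩ := he
      have han := Finset.mem_Icc.1 (hAn (hBA ha))
      obtain ⟨u1, u2, u3⟩ := hu a ha
      rw [Finset.mem_product, Finset.mem_Icc, Finset.mem_range]
      refine ⟨⟨Nat.pos_of_dvd_of_pos u1 han.1, ?_⟩, ?_⟩
      · rw [Nat.le_sqrt']; exact u2
      · have : ((a / u a : ℕ) : ℝ) < ((⌊S ^ 5⌋₊ + 1 : ℕ) : ℝ) * (⌈S ^ 3⌉₊ : ℕ) := by
          calc _ ≤ S ^ 8 := u3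
            _ = S ^ 5 * S ^ 3 := by ring
            _ < _ := by
              apply mul_lt_mul hf1 hc1 (by positivity) (by positivity)
        exact_mod_cast this)
  rw [gr_card hd, Nat.card_Icc, Nat.add_sub_cancel] at main
  have main' : (B.card : ℝ) ≤ ((⌊S ^ 5⌋₊ + 1 : ℕ) : ℝ) * ((Nat.sqrt n : ℕ) + ((⌈S ^ 3⌉₊ : ℕ) : ℝ) ^ 2) := by
    exact_mod_cast main
  calc (B.card : ℝ) ≤ _ := main'
    _ ≤ (2 * S ^ 5) * (S ^ 6 + (2 * S ^ 3) ^ 2) := by gcongr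
    _ = _ := by ring

lemma two_bound {n : ℕ} {S T : ℝ} (hn : 2 ≤ n) (hS1 : 1 ≤ S) (hS : S ^ 12 = n)
    (hT1 : 1 ≤ T) (hT : T ^ 3 = n) {A : Finset ℕ}
    (hA : MulSidonK 2 A) (hAn : A ⊆ Finset.Icc 1 n) :
    (A.card : ℝ) ≤ Nat.primeCounting n + 2 * T ^ 2 + 10 * S ^ 11 := by
  classical
  set A1 := A.filter (fun a => ∃ p : ℕ, p.Prime ∧ p ∣ a ∧ n ^ 2 < p ^ 3) with hA1
  set A2 := A.filter (fun a => a ^ 2 < n) with hA2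
  set A3 := A.filter (fun a => n ≤ a ^ 2 ∧ ∀ p, p.Prime → p ∣ a → p ^ 3 ≤ n ^ 2) with hA3
  have hsub : A ⊆ A1 ∪ A2 ∪ A3 := by
    intro a ha
    simp only [hA1, hA2, hA3, Finset.mem_union, Finset.mem_filter, ha, true_and]
    by_contra hcon
    push Not at hcon
    obtain ⟨⟨h1, h2⟩, h3⟩ := hcon
    obtain ⟨p, p1, p2, p3⟩ := h3 h2
    have := h1 p p1 p2
    omega
  have hcard : (A.card : ℝ) ≤ A1.card + A2.card + A3.card := by
    have := Finset.card_le_card hsub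
    have c2 := Finset.card_union_le (A1 ∪ A2) A3
    have c3 := Finset.card_union_le A1 A2
    have : A.card ≤ A1.card + A2.card + A3.card := by omega
    exact_mod_cast this
  have b1 := large2 (by omega) (by linarith) hT (B := A1) hA (Finset.filter_subset _ _) hAn
    (fun a ha => (Finset.mem_filter.1 ha).2)
  have b2 := small_part hT1 hT (B := A2) ((Finset.filter_subset _ _).trans hAn)
    (fun a ha => (Finset.mem_filter.1 ha).2)
  have b3 := two_rest hn hS1 hS (B := A3) hA (Finset.filter_subset _ _) hAn
    (fun a ha => (Finset.mem_filter.1 ha).2.1) (fun a ha => (Finset.mem_filter.1 ha).2.2)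
  linarith

lemma pi_large0 : ∀ᶠ N : ℕ in Filter.atTop, 30 * (N : ℝ) ^ ((11 : ℝ) / 12) ≤ Nat.primeCounting N := by
  have h1 := (isLittleO_log_rpow_atTop (r := (1 : ℝ) / 12) (by norm_num)).bound
    (show (0 : ℝ) < 1 / 100 by norm_num)
  filter_upwards [tendsto_natCast_atTop_atTop.eventually h1, Filter.eventually_ge_atTop 3] with N hN h3
  have hN3 : (3 : ℝ) ≤ N := by exact_mod_cast h3
  have hN0 : (0 : ℝ) < N := by linarith
  have hlog : 0 < Real.log N := Real.log_pos (by linarith)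
  rw [Real.norm_of_nonneg hlog.le, Real.norm_of_nonneg (by positivity)] at hN
  refine le_trans ?_ (Chebyshev.pi_ge N)
  rw [le_div_iff₀ hlog]
  have e1 : (N : ℝ) ^ ((11 : ℝ) / 12) * (N : ℝ) ^ ((1 : ℝ) / 12) = N := by
    rw [← Real.rpow_add hN0]; norm_num
  have e2 : (N : ℝ) ^ ((1 : ℝ) / 12) ≤ N := by
    conv_rhs => rw [← Real.rpow_one (N : ℝ)]
    exact Real.rpow_le_rpow_of_exponent_le (by linarith) (by norm_num)
  have e3 : Real.log (N + 1) ≤ 2 * Real.log N := by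
    have : Real.log ((N : ℝ) ^ 2) = 2 * Real.log N := by rw [Real.log_pow]; norm_num
    rw [← this]
    exact Real.log_le_log (by positivity) (by nlinarith)
  have e4 : 30 * (N : ℝ) ^ ((11 : ℝ) / 12) * Real.log N ≤
      30 * (N : ℝ) ^ ((11 : ℝ) / 12) * (1 / 100 * (N : ℝ) ^ ((1 : ℝ) / 12)) := by gcongr
  have e5 : (0.5 : ℝ) * N ≤ N * Real.log 2 := by nlinarith [Real.log_two_gt_d9]
  nlinarith

lemma pi_large : ∀ᶠ n : ℕ in Filter.atTop,
    10 * (n : ℝ) ^ ((11 : ℝ) / 12) ≤ Nat.primeCounting (n / 2) := by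
  have h := (Nat.tendsto_div_const_atTop (n := 2) (by norm_num)).eventually pi_large0
  filter_upwards [h, Filter.eventually_ge_atTop 2] with n hn h2
  refine le_trans ?_ hn
  have h3 : n ≤ 3 * (n / 2) := by omega
  have h3' : (n : ℝ) ≤ 3 * ((n / 2 : ℕ) : ℝ) := by exact_mod_cast h3
  calc 10 * (n : ℝ) ^ ((11 : ℝ) / 12) ≤ 10 * (3 * ((n / 2 : ℕ) : ℝ)) ^ ((11 : ℝ) / 12) := by gcongr
    _ = 10 * (3 ^ ((11 : ℝ) / 12) * ((n / 2 : ℕ) : ℝ) ^ ((11 : ℝ) / 12)) := by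
      rw [Real.mul_rpow (by norm_num) (by positivity)]
    _ ≤ 10 * (3 ^ (1 : ℝ) * ((n / 2 : ℕ) : ℝ) ^ ((11 : ℝ) / 12)) := by
      gcongr <;> norm_num
    _ = _ := by rw [Real.rpow_one]; ring

lemma delta_bound {n m : ℕ} {l : ℝ} (hn : 2 ≤ n) (hl : l = Real.log n) (hl12 : 12 ≤ l)
    (hm : m = ⌊l ^ (0.9 : ℝ)⌋₊) (h3 : 3 * l ^ (0.9 : ℝ) ≤ l) (h4 : 4 ≤ l ^ (0.9 : ℝ))
    (i : ℕ) (hi0 : Nat.log 8 n ≤ i) (hi1 : (i : ℝ) ≤ l) :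
    (((roughSet m (2 ^ (i + 1))).filter (fun w => 2 ^ i ≤ w)).card : ℝ) ≤
      24576 * l ^ (-0.2 : ℝ) * 2 ^ i := by
  have hl0 : 0 < l := by linarith
  have hlog8 : Real.log 8 ≤ 3 := by
    rw [show (8 : ℝ) = 2 ^ 3 by norm_num, Real.log_pow]
    have := Real.log_two_lt_d9
    push_cast; linarith
  have e4 := Nat.lt_pow_succ_log_self (b := 8) (by norm_num) n
  have hi : l ≤ 3 * (i + 1) := by
    have h : (n : ℝ) ≤ 8 ^ (i + 1) := by
      have : n ≤ 8 ^ (i + 1) := e4.le.trans (Nat.pow_le_pow_right (by norm_num) (by omega))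
      exact_mod_cast this
    have := Real.log_le_log (by positivity) h
    rw [Real.log_pow, ← hl] at this
    push_cast at this
    nlinarith
  have hm1 : (m : ℝ) ≤ l ^ (0.9 : ℝ) := by rw [hm]; exact Nat.floor_le (by positivity)
  have hm2 : l ^ (0.9 : ℝ) < m + 1 := by rw [hm]; exact Nat.lt_floor_add_one _
  have hm3 : 2 ≤ m := by
    have : (2 : ℝ) ≤ m := by linarith
    exact_mod_cast this
  have hmi : m ≤ i + 1 := by
    have : (m : ℝ) ≤ i + 1 := by linarith
    exact_mod_cast this
  have h := rough_count m i hm3 hmi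
  set C : ℝ := (((roughSet m (2 ^ (i + 1))).filter (fun w => 2 ^ i ≤ w)).card : ℝ) with hC
  have hC0 : 0 ≤ C := by positivity
  have hmm : l ^ (0.9 : ℝ) / 2 ≤ (m : ℝ) - 1 := by linarith
  have hr : (i : ℝ) / (m - 1 : ℝ) ≤ 2 * l ^ (0.1 : ℝ) := by
    rw [div_le_iff₀ (by linarith)]
    have : l ^ (0.1 : ℝ) * l ^ (0.9 : ℝ) = l := by
      rw [← Real.rpow_add hl0]; norm_num
    have h5 : 2 * l ^ (0.1 : ℝ) * (l ^ (0.9 : ℝ) / 2) ≤ 2 * l ^ (0.1 : ℝ) * ((m : ℝ) - 1) := by gcongr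
    nlinarith
  have hr0 : 0 ≤ (i : ℝ) / (m - 1 : ℝ) := by
    apply div_nonneg (by positivity); linarith
  have h8 : ((i : ℝ) / (m - 1 : ℝ)) ^ 8 ≤ 256 * l ^ (0.8 : ℝ) := by
    calc _ ≤ (2 * l ^ (0.1 : ℝ)) ^ 8 := by gcongr
      _ = 256 * (l ^ (0.1 : ℝ)) ^ 8 := by ring
      _ = _ := by rw [← Real.rpow_natCast (l ^ (0.1 : ℝ)), ← Real.rpow_mul hl0.le]; norm_num
  have hi4 : l / 4 ≤ i := by linarith
  have h9 : C * (l / 4) ≤ 24 * 2 ^ i * (256 * l ^ (0.8 : ℝ)) := by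
    calc C * (l / 4) ≤ C * i := by gcongr
      _ ≤ _ := h
      _ ≤ _ := by gcongr
  have h10 : l ^ (0.8 : ℝ) = l ^ (-0.2 : ℝ) * l := by
    conv_rhs => rw [← Real.rpow_one l, ← Real.rpow_mul hl0.le, ← Real.rpow_add hl0]
    norm_num
  rw [h10] at h9
  have : C * l ≤ (24576 * l ^ (-0.2 : ℝ) * 2 ^ i) * l := by nlinarith
  exact le_of_mul_le_mul_right this hl0

lemma i1_le {n : ℕ} (hn : 2 ≤ n) : (Nat.log 8 (n ^ 2) : ℝ) ≤ Real.log n := by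
  have e3 := Nat.pow_log_le_self 8 (pow_pos (by omega : 0 < n) 2).ne'
  have h : (8 : ℝ) ^ (Nat.log 8 (n ^ 2)) ≤ (n : ℝ) ^ 2 := by exact_mod_cast e3
  have := Real.log_le_log (by positivity) h
  rw [Real.log_pow, Real.log_pow] at this
  have hlog8 : 2 ≤ Real.log 8 := by
    rw [show (8 : ℝ) = 2 ^ 3 by norm_num, Real.log_pow]
    have := Real.log_two_gt_d9
    push_cast; linarith
  push_cast at this
  have h0 : (0 : ℝ) ≤ Nat.log 8 (n ^ 2) := by positivity
  nlinarith

lemma both_bound : ∃ K : ℝ, 0 ≤ K ∧ ∀ᶠ n : ℕ in Filter.atTop, ∀ A : Finset ℕ, A ⊆ Finset.Icc 1 n →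
    (MulSidonK 2 A ∨ MulSidonK 3 A) → (A.card : ℝ) ≤ Nat.primeCounting n +
      Nat.primeCounting (n / 2) + (n : ℝ) ^ ((2 : ℝ) / 3) * (K * Real.log n ^ (0.9 : ℝ)) := by
  refine ⟨307 + 16 * (24576 : ℝ) ^ ((2 : ℝ) / 3), by positivity, ?_⟩
  have hl := Real.tendsto_log_atTop.comp (tendsto_natCast_atTop_atTop (R := ℝ))
  have hlo := (tendsto_rpow_atTop (show (0 : ℝ) < 0.1 by norm_num)).eventually
      (Filter.eventually_ge_atTop 6)
  filter_upwards [pi_large, hl.eventually hlo, hl.eventually (Filter.eventually_ge_atTop 12),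
    hl.eventually ((tendsto_rpow_atTop (show (0 : ℝ) < 0.9 by norm_num)).eventually
      (Filter.eventually_ge_atTop 4)), Filter.eventually_ge_atTop 2] with n hpi h6 h12 h4 hn A hAn hA
  simp only [Function.comp_apply] at h6 h12 h4
  set l := Real.log n with hldef
  have hl0 : 0 < l := by linarith
  replace h6 : 6 * l ^ (0.9 : ℝ) ≤ l := by
    have : l ^ (0.1 : ℝ) * l ^ (0.9 : ℝ) = l := by
      rw [← Real.rpow_add hl0]; norm_num
    nlinarith
  have hn1 : (1 : ℝ) ≤ n := by exact_mod_cast (by omega : 1 ≤ n)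
  have hn0 : (0 : ℝ) < n := by linarith
  set T := (n : ℝ) ^ ((1 : ℝ) / 3) with hTdef
  have hT : T ^ 3 = n := by
    rw [hTdef, ← Real.rpow_natCast, ← Real.rpow_mul hn0.le]; norm_num
  have hT1 : 1 ≤ T := Real.one_le_rpow hn1 (by norm_num)
  have hT2 : (n : ℝ) ^ ((2 : ℝ) / 3) = T ^ 2 := by
    rw [hTdef, ← Real.rpow_natCast, ← Real.rpow_mul hn0.le]; norm_num
  rw [hT2]
  have hC0 : (0 : ℝ) ≤ (24576 : ℝ) ^ ((2 : ℝ) / 3) := by positivity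
  rcases hA with hA | hA
  · set S := (n : ℝ) ^ ((1 : ℝ) / 12) with hSdef
    have hS : S ^ 12 = n := by
      rw [hSdef, ← Real.rpow_natCast, ← Real.rpow_mul hn0.le]; norm_num
    have hS1 : 1 ≤ S := Real.one_le_rpow hn1 (by norm_num)
    have hS2 : (n : ℝ) ^ ((11 : ℝ) / 12) = S ^ 11 := by
      rw [hSdef, ← Real.rpow_natCast, ← Real.rpow_mul hn0.le]; norm_num
    have h := two_bound hn hS1 hS hT1 hT hA hAn
    rw [hS2] at hpi
    have h2 : T ^ 2 * 2 ≤ T ^ 2 * ((307 + 16 * (24576 : ℝ) ^ ((2 : ℝ) / 3)) * l ^ (0.9 : ℝ)) := by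
      gcongr
      nlinarith
    linarith
  · set m := ⌊l ^ (0.9 : ℝ)⌋₊ with hm
    have hm1 : (m : ℝ) ≤ l ^ (0.9 : ℝ) := Nat.floor_le (by positivity)
    have h4m : (4 : ℝ) ^ m ≤ T := by
      rw [← Real.log_le_log_iff (by positivity) (by positivity), Real.log_pow, hTdef,
        Real.log_rpow hn0]
      have : Real.log 4 ≤ 2 := by
        rw [show (4 : ℝ) = 2 ^ 2 by norm_num, Real.log_pow]
        have := Real.log_two_lt_d9
        push_cast; linarith
      have hm0 : (0 : ℝ) ≤ m := by positivity
      nlinarith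
    have hi1 := i1_le hn
    have h := three_bound (m := m) (δ := 24576 * l ^ (-0.2 : ℝ)) hn hT1 hT (by positivity) h4m
      (fun i a b => delta_bound hn hldef h12 hm (by linarith) h4 i a
        (le_trans (by exact_mod_cast b) hi1)) hA hAn
    refine h.trans ?_
    gcongr
    rw [Real.mul_rpow (by norm_num) (by positivity), ← Real.rpow_mul hl0.le]
    have e1 : (Nat.log 8 (n ^ 2) + 1 : ℝ) ≤ 2 * l := by linarith
    have e2 : l * l ^ ((-0.2 : ℝ) * (2 / 3)) ≤ l ^ (0.9 : ℝ) := by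
      conv_lhs => rw [← Real.rpow_one l, ← Real.rpow_mul hl0.le, ← Real.rpow_add hl0]
      exact Real.rpow_le_rpow_of_exponent_le (by linarith) (by norm_num)
    have e3 : (Nat.log 8 (n ^ 2) + 1 : ℝ) * (8 * ((24576 : ℝ) ^ ((2 : ℝ) / 3) *
        l ^ ((-0.2 : ℝ) * (2 / 3)))) ≤ (2 * l) * (8 * ((24576 : ℝ) ^ ((2 : ℝ) / 3) *
        l ^ ((-0.2 : ℝ) * (2 / 3)))) := by gcongr
    have e4 : (24576 : ℝ) ^ ((2 : ℝ) / 3) * (l * l ^ ((-0.2 : ℝ) * (2 / 3))) ≤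
      (24576 : ℝ) ^ ((2 : ℝ) / 3) * l ^ (0.9 : ℝ) := by gcongr
    linarith

theorem mulSidonK_card_upper_bound (k : ℕ) (hk3 : 3 ≤ k) (hkodd : Odd k) :
    ∀ ε : ℝ, 0 < ε → ∃ N : ℕ, ∀ n : ℕ, N ≤ n → ∀ A : Finset ℕ, A ⊆ Finset.Icc 1 n →
      MulSidonK k A →
      (A.card : ℝ) ≤ (Nat.primeCounting n : ℝ) + (Nat.primeCounting (n / 2) : ℝ) +
        (n : ℝ) ^ ((2 : ℝ) / 3) *
          Real.log n ^ ((2 : ℝ) ^ ((1 : ℝ) / 3) - 1 / 3 + ε) := by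
  intro ε hε
  obtain ⟨j, rfl⟩ : ∃ j, k = 3 + 2 * j := by
    obtain ⟨r, rfl⟩ := hkodd
    exact ⟨r - 1, by omega⟩
  obtain ⟨K, hK0, hK⟩ := both_bound
  have hl := Real.tendsto_log_atTop.comp (tendsto_natCast_atTop_atTop (R := ℝ))
  have hev : ∀ᶠ n : ℕ in Filter.atTop, ∀ A : Finset ℕ, A ⊆ Finset.Icc 1 n →
      MulSidonK (3 + 2 * j) A →
      (A.card : ℝ) ≤ (Nat.primeCounting n : ℝ) + (Nat.primeCounting (n / 2) : ℝ) +
        (n : ℝ) ^ ((2 : ℝ) / 3) *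
          Real.log n ^ ((2 : ℝ) ^ ((1 : ℝ) / 3) - 1 / 3 + ε) := by
    filter_upwards [hK, hl.eventually (Filter.eventually_ge_atTop 1),
      hl.eventually ((tendsto_rpow_atTop (show (0 : ℝ) < 0.01 by norm_num)).eventually
      (Filter.eventually_ge_atTop (K + 4 * j))), Filter.eventually_ge_atTop 1] with n hn h1 h2 hn1 A hAn hA
    simp only [Function.comp_apply] at h1 h2
    have h := reduction n _ (fun A a b => hn A a (Or.inl b)) (fun A a b => hn A a (Or.inr b)) j A hAn hA
    refine h.trans ?_
    set l := Real.log n with hldef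
    have hl0 : 0 < l := by linarith
    have hn1' : (1 : ℝ) ≤ n := by exact_mod_cast hn1
    have hP : 1 ≤ (n : ℝ) ^ ((2 : ℝ) / 3) := Real.one_le_rpow hn1' (by norm_num)
    have hL : 1 ≤ l ^ (0.9 : ℝ) := Real.one_le_rpow h1 (by norm_num)
    have h54 : (1.25 : ℝ) ≤ (2 : ℝ) ^ ((1 : ℝ) / 3) := by
      apply le_of_pow_le_pow_left₀ (n := 3) (by norm_num) (by positivity)
      rw [← Real.rpow_natCast ((2 : ℝ) ^ ((1 : ℝ) / 3)), ← Real.rpow_mul (by norm_num)]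
      norm_num
    have h5 : (K + 4 * j) * l ^ (0.9 : ℝ) ≤ l ^ ((2 : ℝ) ^ ((1 : ℝ) / 3) - 1 / 3 + ε) := by
      calc _ ≤ l ^ (0.01 : ℝ) * l ^ (0.9 : ℝ) := by gcongr
        _ = l ^ (0.91 : ℝ) := by rw [← Real.rpow_add hl0]; norm_num
        _ ≤ _ := by
          apply Real.rpow_le_rpow_of_exponent_le h1
          norm_num at h54 ⊢
          linarith
    have h6 : (n : ℝ) ^ ((2 : ℝ) / 3) * ((K + 4 * j) * l ^ (0.9 : ℝ)) ≤
        (n : ℝ) ^ ((2 : ℝ) / 3) * l ^ ((2 : ℝ) ^ ((1 : ℝ) / 3) - 1 / 3 + ε) := by gcongr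
    have h7 : (1 : ℝ) ≤ (n : ℝ) ^ ((2 : ℝ) / 3) * l ^ (0.9 : ℝ) := by nlinarith
    have h8 : (0 : ℝ) ≤ j := by positivity
    nlinarith
  obtain ⟨N, hN⟩ := Filter.eventually_atTop.1 hev
  exact ⟨N, hN⟩
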